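/- arXiv:2005.14459 — 5 statements merged into one kernel-verified Lean document; each statement's English description precedes it below -/
import Mathlib

section
/- Sharp Hardy inequality: For every integer d ≥ 3 and every smooth compactly supported function u : ℝ^d → ℝ, one has ((d−2)/2)² ∫_{ℝ^d} |u(x)|²/|x|² dx ≤ ∫_{ℝ^d} |∇u(x)|² dx. -/
/-!
The proof is a regularised version of the classical vector field argument. Put `c = (d - 2) / 2`
and, for `ε > 0`, `w = 1 / (|x|² + ε)` and `F = w x`, a smooth field with
`div F = d w - 2 |x|² w² ≥ (d - 2) w` and `|F|² = |x|² w² ≤ w`. Expanding `0 ≤ |∇u + c u F|²`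
and integrating the cross term by parts (`integral_fderiv_self`, applied to `φ = u² w`) gives
`∫ |∇u|² ≥ c ∫ u² div F - c² ∫ u² |F|² ≥ (c (d - 2) - c²) ∫ u² w = c² ∫ u² w`
(`hardy_regularized`). The regularisation keeps every integrand continuous with compact support.
Letting `ε → 0` by dominated convergence gives the theorem.
-/

noncomputable section

open MeasureTheory

/-- The divergence theorem for the field `φ(x) x`, whose divergence is `d φ + Dφ(x) x`. -/
lemma integral_fderiv_self {d : ℕ} {φ : EuclideanSpace ℝ (Fin d) → ℝ}
    (hφ : ContDiff ℝ 1 φ) (hc : HasCompactSupport φ) :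
    ∫ x, fderiv ℝ φ x x = -((d : ℝ) * ∫ x, φ x) := by
  have hcont : Continuous (fderiv ℝ φ) := hφ.continuous_fderiv one_ne_zero
  have hcd : HasCompactSupport (fderiv ℝ φ) := hc.fderiv ℝ
  have hint : Integrable φ := hφ.continuous.integrable_of_hasCompactSupport hc
  let e : Fin d → EuclideanSpace ℝ (Fin d) := fun i => EuclideanSpace.single i 1
  have hterm : ∀ i, Integrable (fun x : EuclideanSpace ℝ (Fin d) => x i * fderiv ℝ φ x (e i)) := by
    intro i
    refine Continuous.integrable_of_hasCompactSupport (by fun_prop) ?_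
    exact (hcd.comp_left (g := fun L : EuclideanSpace ℝ (Fin d) →L[ℝ] ℝ => L (e i)) rfl).mul_left
  have hproj : ∀ (i : Fin d) (x : EuclideanSpace ℝ (Fin d)),
      fderiv ℝ (fun y : EuclideanSpace ℝ (Fin d) => y i) x (e i) = 1 := by
    intro i x
    have : HasFDerivAt (fun y : EuclideanSpace ℝ (Fin d) => y i)
        (EuclideanSpace.proj i : EuclideanSpace ℝ (Fin d) →L[ℝ] ℝ) x :=
      (EuclideanSpace.proj i : EuclideanSpace ℝ (Fin d) →L[ℝ] ℝ).hasFDerivAt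
    rw [this.fderiv]
    simp [e]
  have hparts : ∀ i, ∫ x : EuclideanSpace ℝ (Fin d), x i * fderiv ℝ φ x (e i) = -∫ x, φ x := by
    intro i
    rw [integral_mul_fderiv_eq_neg_fderiv_mul_of_integrable
      (f := fun x : EuclideanSpace ℝ (Fin d) => x i)]
    · simp only [hproj, one_mul]
    · simpa only [hproj, one_mul] using hint
    · exact hterm i
    · exact Continuous.integrable_of_hasCompactSupport
        (by have := hφ.continuous; fun_prop) hc.mul_left
    · intro x _
      fun_prop
    · intro x _
      exact hφ.differentiable one_ne_zero x
  have hsum : ∀ x : EuclideanSpace ℝ (Fin d),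
      fderiv ℝ φ x x = ∑ i, x i * fderiv ℝ φ x (e i) := by
    intro x
    have hx : x = ∑ i, x i • e i := by
      have := (EuclideanSpace.basisFun (Fin d) ℝ).sum_repr x
      simpa [e] using this.symm
    have := congrArg (fderiv ℝ φ x) hx
    simpa only [map_sum, map_smul, smul_eq_mul] using this
  simp_rw [hsum]
  rw [integral_finsetSum _ fun i _ => hterm i]
  simp [hparts]

/-- Hardy's inequality with the weight `1 / |x|²` smoothed to `1 / (|x|² + ε)`. -/
lemma hardy_regularized {d : ℕ} (hd : 3 ≤ d) {u : EuclideanSpace ℝ (Fin d) → ℝ}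
    (hu : ContDiff ℝ 1 u) (hc : HasCompactSupport u) {ε : ℝ} (hε : 0 < ε) :
    (((d : ℝ) - 2) / 2) ^ 2 * ∫ x, (u x) ^ 2 / (‖x‖ ^ 2 + ε) ≤ ∫ x, ‖gradient u x‖ ^ 2 := by
  have hpos : ∀ x : EuclideanSpace ℝ (Fin d), 0 < ‖x‖ ^ 2 + ε := fun x => by positivity
  set c : ℝ := ((d : ℝ) - 2) / 2 with hcdef
  have hc0 : 0 ≤ c := by
    have : (3 : ℝ) ≤ d := by exact_mod_cast hd
    rw [hcdef]; linarith
  let φ : EuclideanSpace ℝ (Fin d) → ℝ := fun x => (u x) ^ 2 / (‖x‖ ^ 2 + ε)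
  have hφ : ContDiff ℝ 1 φ :=
    (hu.pow 2).div ((contDiff_norm_sq ℝ).add contDiff_const) fun x => (hpos x).ne'
  have hφc : HasCompactSupport φ := by
    refine hc.mono fun x hx => ?_
    contrapose! hx
    simp_all [φ]
  have hφi : Integrable φ := hφ.continuous.integrable_of_hasCompactSupport hφc
  have hdi : Integrable (fun x => fderiv ℝ φ x x) := by
    have := hφ.continuous_fderiv one_ne_zero
    refine Continuous.integrable_of_hasCompactSupport (by fun_prop) ?_
    refine (hφc.fderiv ℝ).mono fun x hx => ?_
    contrapose! hx
    simp_all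
  have hgi : Integrable (fun x => ‖gradient u x‖ ^ 2) := by
    have := hu.continuous_fderiv one_ne_zero
    have hg : Continuous (gradient u) := by unfold gradient; fun_prop
    refine Continuous.integrable_of_hasCompactSupport (by fun_prop) ?_
    refine (hc.fderiv ℝ).mono fun x hx => ?_
    contrapose! hx
    simp_all [gradient]
  have hderiv : ∀ x, fderiv ℝ φ x x =
      2 * u x * inner ℝ (gradient u x) x / (‖x‖ ^ 2 + ε)
        - 2 * (u x) ^ 2 * ‖x‖ ^ 2 / (‖x‖ ^ 2 + ε) ^ 2 := by
    intro x
    have h1 : HasFDerivAt u (fderiv ℝ u x) x := (hu.differentiable one_ne_zero x).hasFDerivAt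
    have h2 := (hasStrictFDerivAt_norm_sq x).hasFDerivAt.add_const ε
    have h3 := (h1.pow 2).mul ((hasDerivAt_inv (hpos x).ne').comp_hasFDerivAt x h2)
    have h4 : inner ℝ (gradient u x) x = fderiv ℝ u x x := by simp [gradient]
    have h5 : fderiv ℝ φ x = _ :=
      (h3.congr_of_eventuallyEq (.of_forall fun y => div_eq_mul_inv _ _)).fderiv
    rw [h5, h4]
    have := (hpos x).ne'
    simp
    field_simp
    ring
  -- The left side is `c² u² w - c div (u² F)`; it falls short of the right side by
  -- `|∇u + c u F|² + (2 c + c²) ε u² w²`.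
  have hpt : ∀ x, c ^ 2 * φ x - c * (d * φ x + fderiv ℝ φ x x) ≤ ‖gradient u x‖ ^ 2 := by
    intro x
    have hsq : 0 ≤ ‖gradient u x + (c * u x / (‖x‖ ^ 2 + ε)) • x‖ ^ 2 := by positivity
    rw [norm_add_sq_real, norm_smul, mul_pow, inner_smul_right, Real.norm_eq_abs, sq_abs] at hsq
    rw [hderiv]
    have hp := hpos x
    have hdc : (d : ℝ) = 2 * c + 2 := by rw [hcdef]; ring
    have key : 0 ≤ (2 * c + c ^ 2) * ε * (u x) ^ 2 / (‖x‖ ^ 2 + ε) ^ 2 := by positivity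
    have heq : ‖gradient u x‖ ^ 2 - (c ^ 2 * φ x - c * (d * φ x +
        (2 * u x * inner ℝ (gradient u x) x / (‖x‖ ^ 2 + ε)
        - 2 * (u x) ^ 2 * ‖x‖ ^ 2 / (‖x‖ ^ 2 + ε) ^ 2))) =
        (‖gradient u x‖ ^ 2 + 2 * (c * u x / (‖x‖ ^ 2 + ε) * inner ℝ (gradient u x) x) +
          (c * u x / (‖x‖ ^ 2 + ε)) ^ 2 * ‖x‖ ^ 2) +
          (2 * c + c ^ 2) * ε * (u x) ^ 2 / (‖x‖ ^ 2 + ε) ^ 2 := by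
      simp only [φ]
      rw [hdc]
      field_simp
      ring
    linarith
  have hi1 : Integrable (fun x => c ^ 2 * φ x) := hφi.const_mul _
  have hi2 : Integrable (fun x => (d : ℝ) * φ x) := hφi.const_mul _
  have hi3 : Integrable (fun x => c * (d * φ x + fderiv ℝ φ x x)) := (hi2.add hdi).const_mul _
  have hmono := integral_mono (hi1.sub hi3) hgi hpt
  simp only [Pi.sub_apply] at hmono
  rw [integral_sub hi1 hi3, integral_const_mul, integral_const_mul, integral_add hi2 hdi,
    integral_const_mul, integral_fderiv_self hφ hφc] at hmono
  simpa using hmono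

/-- **Sharp Hardy inequality.** For `d ≥ 3` and every smooth compactly supported
`u : ℝ^d → ℝ`, one has `((d−2)/2)² ∫ |u|²/|x|² ≤ ∫ |∇u|²`. -/
theorem sharp_hardy_inequality (d : ℕ) (hd : 3 ≤ d)
    (u : EuclideanSpace ℝ (Fin d) → ℝ)
    (hu : ContDiff ℝ (⊤ : ℕ∞) u) (hsupp : HasCompactSupport u) :
    (((d : ℝ) - 2) / 2) ^ 2 * ∫ x : EuclideanSpace ℝ (Fin d), (u x) ^ 2 / ‖x‖ ^ 2
      ≤ ∫ x : EuclideanSpace ℝ (Fin d), ‖gradient u x‖ ^ 2 := by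
  have hu1 : ContDiff ℝ 1 u := hu.of_le (by exact_mod_cast le_top)
  have : Nonempty (Fin d) := ⟨⟨0, by omega⟩⟩
  by_cases hint : Integrable (fun x : EuclideanSpace ℝ (Fin d) => (u x) ^ 2 / ‖x‖ ^ 2)
  · let ε : ℕ → ℝ := fun n => 1 / ((n : ℝ) + 1)
    have hε : ∀ n, 0 < ε n := fun n => by positivity
    have hne : ∀ᵐ x : EuclideanSpace ℝ (Fin d), x ≠ 0 := by
      simp [ae_iff]
    have hlim : Filter.Tendsto
        (fun n => ∫ x : EuclideanSpace ℝ (Fin d), (u x) ^ 2 / (‖x‖ ^ 2 + ε n)) Filter.atTop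
        (nhds (∫ x : EuclideanSpace ℝ (Fin d), (u x) ^ 2 / ‖x‖ ^ 2)) := by
      refine tendsto_integral_of_dominated_convergence _ (fun n => ?_) hint (fun n => ?_) ?_
      · have := hu1.continuous
        refine Continuous.aestronglyMeasurable ?_
        exact (this.pow 2).div (by fun_prop) fun x => by have := hε n; positivity
      · filter_upwards [hne] with x hx
        have := hε n
        have hx' : 0 < ‖x‖ := norm_pos_iff.mpr hx
        rw [Real.norm_of_nonneg (by positivity)]
        gcongr
        linarith
      · filter_upwards [hne] with x hx
        have hx' : ‖x‖ ^ 2 ≠ 0 := by simpa using hx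
        have h0 : Filter.Tendsto ε Filter.atTop (nhds 0) := tendsto_one_div_add_atTop_nhds_zero_nat
        have h1 : Filter.Tendsto (fun n => ‖x‖ ^ 2 + ε n) Filter.atTop (nhds (‖x‖ ^ 2)) := by
          simpa using h0.const_add (‖x‖ ^ 2)
        exact tendsto_const_nhds.div h1 hx'
    exact le_of_tendsto (hlim.const_mul _)
      (Filter.Eventually.of_forall fun n => hardy_regularized hd hu1 hsupp (hε n))
  -- A non-integrable function has Bochner integral zero, so the left side would vanish.
  · rw [integral_undef hint, mul_zero]
    positivity
end
end

section
/- Radial pointwise estimate (Lemma 2.1, first part): Let d ≥ 3. There is a constant C depending only on d such that every radial function u : ℝ^d → ℝ (u(x) = f(|x|) for some f, write u(r) for the value at |x| = r) which is continuously differentiable on ℝ^d∖{0}, satisfies ∫_{ℝ^d}|∇u(x)|² dx < ∞, and satisfies u(r) → 0 as r → ∞, obeys |u(r)| ≤ C r^{−(d−2)/2} (∫_{ℝ^d}|∇u(x)|²dx)^{1/2} for all r > 0. -/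
/-!
Write `g = f'`. The chain rule along the ray through `x ≠ 0` gives `g ‖x‖ = ⟪∇u x, x/‖x‖⟫`, hence
`|g ‖x‖| ≤ ‖∇u x‖`, and polar coordinates turn this into
`d ω_d ∫₀^∞ s^(d-1) g(s)² ds ≤ ‖∇u‖²_{L²}`, with `ω_d` the volume of the unit ball. Since `f`
vanishes at infinity, `f r = -∫_r^∞ g`, and Cauchy–Schwarz with weight `s^(d-1)` gives
`f(r)² ≤ ∫_r^∞ s^(1-d) ds · ∫_r^∞ s^(d-1) g² ds`, where the first factor is `r^(2-d) / (d-2)`.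

Cauchy–Schwarz is used in its quadratic-polynomial form, integrating
`2 l |g| ≤ l² s^(d-1) g² + s^(1-d)`; the case `l = 1` also shows that `g` is integrable on `(r, ∞)`.
-/

noncomputable section

open MeasureTheory Filter

/-- The chain rule along the ray through the unit vector `e`. -/
lemma radial_hasDerivAt {d : ℕ} {u : EuclideanSpace ℝ (Fin d) → ℝ} {f : ℝ → ℝ}
    (hu : ∀ x, u x = f ‖x‖)
    (hc : ContDiffOn ℝ 1 u {x : EuclideanSpace ℝ (Fin d) | x ≠ 0})
    {e : EuclideanSpace ℝ (Fin d)} (he : ‖e‖ = 1) {t : ℝ} (ht : 0 < t) :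
    HasDerivAt f (inner ℝ (gradient u (t • e)) e) t := by
  have he0 : e ≠ 0 := by
    rintro rfl
    simp at he
  have hx : t • e ≠ 0 := smul_ne_zero ht.ne' he0
  have hdiff : DifferentiableAt ℝ u (t • e) :=
    (hc.contDiffAt (isOpen_ne.mem_nhds hx)).differentiableAt (by simp)
  have hray : HasDerivAt (fun s : ℝ => s • e) e t := by
    simpa using (hasDerivAt_id t).smul_const e
  have h := hdiff.hasFDerivAt.comp_hasDerivAt t hray
  rw [inner_gradient_left]
  refine h.congr_of_eventuallyEq ?_
  filter_upwards [lt_mem_nhds ht] with s hs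
  simp [hu, norm_smul, he, abs_of_pos hs]

lemma abs_deriv_le_norm_gradient {d : ℕ} {u : EuclideanSpace ℝ (Fin d) → ℝ} {f : ℝ → ℝ}
    (hu : ∀ x, u x = f ‖x‖)
    (hc : ContDiffOn ℝ 1 u {x : EuclideanSpace ℝ (Fin d) | x ≠ 0})
    {x : EuclideanSpace ℝ (Fin d)} (hx : x ≠ 0) :
    |deriv f ‖x‖| ≤ ‖gradient u x‖ := by
  have hn : 0 < ‖x‖ := norm_pos_iff.2 hx
  have he : ‖(‖x‖⁻¹ • x)‖ = 1 := by
    simp [norm_smul, hn.ne']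
  have h := radial_hasDerivAt hu hc he hn
  rw [smul_inv_smul₀ hn.ne'] at h
  rw [h.deriv]
  simpa [he] using abs_real_inner_le_norm (gradient u x) (‖x‖⁻¹ • x)

/-- One-dimensional weighted Cauchy–Schwarz bound for a function vanishing at infinity. -/
lemma sq_le_of_weighted_integrable {d : ℕ} (hd : 3 ≤ d) {f : ℝ → ℝ}
    (hf : ∀ t, 0 < t → DifferentiableAt ℝ f t)
    (hint : IntegrableOn (fun s : ℝ => s ^ (d - 1) * (deriv f s) ^ 2) (Set.Ioi 0))
    (hlim : Tendsto f atTop (nhds 0)) {r : ℝ} (hr : 0 < r) :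
    (f r) ^ 2 ≤ (∫ s in Set.Ioi (0 : ℝ), s ^ (d - 1) * (deriv f s) ^ 2)
      * (r ^ (-((d : ℝ) - 2)) / ((d : ℝ) - 2)) := by
  have hd' : (3 : ℝ) ≤ d := by exact_mod_cast hd
  have ha : (1 - (d : ℝ)) < -1 := by linarith
  have hB := integrableOn_Ioi_rpow_of_lt ha hr
  have hBval := integral_Ioi_rpow_of_lt ha hr
  have hsub : Set.Ioi r ⊆ Set.Ioi (0 : ℝ) := Set.Ioi_subset_Ioi hr.le
  have hA := hint.mono_set hsub
  have key : ∀ l : ℝ, ∀ s ∈ Set.Ioi r, 2 * l * |deriv f s| ≤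
      l ^ 2 * (s ^ (d - 1) * (deriv f s) ^ 2) + s ^ (1 - (d : ℝ)) := by
    intro l s hs
    have hs0 : 0 < s := hr.trans hs
    have hw : s ^ (1 - (d : ℝ)) = (s ^ (d - 1))⁻¹ := by
      rw [← Real.rpow_natCast, ← Real.rpow_neg hs0.le]
      congr 1
      rw [Nat.cast_sub (by omega)]
      simp
    rw [hw, ← sq_abs (deriv f s)]
    have hp : 0 < s ^ (d - 1) := by positivity
    -- multiplied by `w = s ^ (d - 1)`, the difference of the two sides is `(l w |f'| - 1)²`
    have : l ^ 2 * (s ^ (d - 1) * |deriv f s| ^ 2) + (s ^ (d - 1))⁻¹ - 2 * l * |deriv f s|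
        = (l * s ^ (d - 1) * |deriv f s| - 1) ^ 2 * (s ^ (d - 1))⁻¹ := by
      field_simp
      ring
    have : 0 ≤ (l * s ^ (d - 1) * |deriv f s| - 1) ^ 2 * (s ^ (d - 1))⁻¹ := by positivity
    linarith
  have hD : IntegrableOn (deriv f) (Set.Ioi r) := by
    refine Integrable.mono' (hA.add hB) (measurable_deriv f).aestronglyMeasurable ?_
    filter_upwards [ae_restrict_mem measurableSet_Ioi] with s hs
    have := key 1 s hs
    have := abs_nonneg (deriv f s)
    simp only [Pi.add_apply, Real.norm_eq_abs]
    linarith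
  have hftc := integral_Ioi_of_hasDerivAt_of_tendsto'
    (fun x hx => (hf x (hr.trans_le hx)).hasDerivAt) hD hlim
  have hfr : |f r| ≤ ∫ s in Set.Ioi r, |deriv f s| := by
    have h := abs_integral_le_integral_abs (μ := volume.restrict (Set.Ioi r)) (f := deriv f)
    rw [hftc] at h
    simpa using h
  have hAle : ∫ s in Set.Ioi r, s ^ (d - 1) * (deriv f s) ^ 2
      ≤ ∫ s in Set.Ioi (0 : ℝ), s ^ (d - 1) * (deriv f s) ^ 2 := by
    refine setIntegral_mono_set hint ?_ (LE.le.eventuallyLE hsub)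
    filter_upwards [ae_restrict_mem measurableSet_Ioi] with s hs
    have : (0 : ℝ) < s := hs
    simp only [Pi.zero_apply]
    positivity
  have hBeq : ∫ s in Set.Ioi r, s ^ (1 - (d : ℝ)) = r ^ (-((d : ℝ) - 2)) / ((d : ℝ) - 2) := by
    rw [hBval, show (1 - (d : ℝ)) + 1 = -((d : ℝ) - 2) by ring, neg_div_neg_eq]
  rw [← hBeq]
  set A := ∫ s in Set.Ioi (0 : ℝ), s ^ (d - 1) * (deriv f s) ^ 2
  set B := ∫ s in Set.Ioi r, s ^ (1 - (d : ℝ))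
  have hquad : ∀ l : ℝ, 0 ≤ A * (l * l) + (-(2 * ∫ s in Set.Ioi r, |deriv f s|)) * l + B := by
    intro l
    have h := setIntegral_mono_on (hD.abs.const_mul (2 * l)) ((hA.const_mul (l ^ 2)).add hB)
      measurableSet_Ioi (key l)
    simp only [Pi.add_apply] at h
    rw [integral_add (hA.const_mul (l ^ 2)) hB, integral_const_mul, integral_const_mul] at h
    have := mul_le_mul_of_nonneg_left hAle (sq_nonneg l)
    nlinarith
  have hdisc := discrim_le_zero hquad
  rw [discrim] at hdisc
  have := pow_le_pow_left₀ (abs_nonneg (f r)) hfr 2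
  rw [sq_abs] at this
  nlinarith

/-- **Radial pointwise estimate (Lemma 2.1, first part).** For `d ≥ 3` there is a constant
`C = C(d)` such that every radial `Ḣ¹` function `u` (with radial profile `f`, `C¹` away from
the origin and vanishing at spatial infinity) satisfies
`|u(r)| ≤ C r^{−(d−2)/2} ‖u‖_{Ḣ¹}` for all `r > 0`. -/
theorem radial_pointwise_estimate (d : ℕ) (hd : 3 ≤ d) :
    ∃ C : ℝ, 0 < C ∧
      ∀ (u : EuclideanSpace ℝ (Fin d) → ℝ) (f : ℝ → ℝ),
        (∀ x : EuclideanSpace ℝ (Fin d), u x = f ‖x‖) →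
        ContDiffOn ℝ 1 u {x : EuclideanSpace ℝ (Fin d) | x ≠ 0} →
        Integrable (fun x : EuclideanSpace ℝ (Fin d) => ‖gradient u x‖ ^ 2) →
        Tendsto f atTop (nhds 0) →
        ∀ r : ℝ, 0 < r →
          |f r| ≤ C * r ^ (-(((d : ℝ) - 2) / 2))
            * (∫ x : EuclideanSpace ℝ (Fin d), ‖gradient u x‖ ^ 2) ^ ((1 : ℝ) / 2) := by
  have hd' : (3 : ℝ) ≤ d := by exact_mod_cast hd
  have : Nonempty (Fin d) := ⟨⟨0, by omega⟩⟩
  set w : ℝ := volume.real (Metric.ball (0 : EuclideanSpace ℝ (Fin d)) 1) with hw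
  have hwpos : 0 < w :=
    ENNReal.toReal_pos (Metric.measure_ball_pos volume _ one_pos).ne' measure_ball_lt_top.ne
  have hk : 0 < (d : ℝ) * w * ((d : ℝ) - 2) :=
    mul_pos (mul_pos (by linarith) hwpos) (by linarith)
  refine ⟨(Real.sqrt ((d : ℝ) * w * ((d : ℝ) - 2)))⁻¹, by positivity, ?_⟩
  intro u f hu hc hI hlim r hr
  obtain ⟨e, he⟩ := exists_norm_eq (EuclideanSpace ℝ (Fin d)) zero_le_one
  have hdiff : ∀ t, 0 < t → DifferentiableAt ℝ f t := fun t ht =>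
    (radial_hasDerivAt hu hc he ht).differentiableAt
  have hle : ∀ᵐ x : EuclideanSpace ℝ (Fin d), (deriv f ‖x‖) ^ 2 ≤ ‖gradient u x‖ ^ 2 := by
    filter_upwards [Measure.ae_ne volume (0 : EuclideanSpace ℝ (Fin d))] with x hx
    rw [← sq_abs (deriv f ‖x‖)]
    exact pow_le_pow_left₀ (abs_nonneg _) (abs_deriv_le_norm_gradient hu hc hx) 2
  have hG : Integrable (fun x : EuclideanSpace ℝ (Fin d) => (deriv f ‖x‖) ^ 2) := by
    refine Integrable.mono' hI
      (((measurable_deriv f).comp measurable_norm).pow_const 2).aestronglyMeasurable ?_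
    filter_upwards [hle] with x hx
    simpa using hx
  have hpolar := integral_fun_norm_addHaar (volume : Measure (EuclideanSpace ℝ (Fin d)))
    (fun s => (deriv f s) ^ 2)
  have hint := (integrable_fun_norm_addHaar (volume : Measure (EuclideanSpace ℝ (Fin d)))
    (f := fun s => (deriv f s) ^ 2)).1 hG
  simp only [finrank_euclideanSpace, Fintype.card_fin, smul_eq_mul, nsmul_eq_mul, ← hw]
    at hpolar hint
  have hmono := integral_mono_ae hG hI hle
  rw [hpolar] at hmono
  have hsq := sq_le_of_weighted_integrable hd hdiff hint hlim hr
  set A := ∫ s in Set.Ioi (0 : ℝ), s ^ (d - 1) * (deriv f s) ^ 2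
  set I := ∫ x : EuclideanSpace ℝ (Fin d), ‖gradient u x‖ ^ 2
  have hI0 : 0 ≤ I := integral_nonneg fun x => by positivity
  clear_value A I w
  rw [← Real.sqrt_eq_rpow]
  refine abs_le_of_sq_le_sq ?_ (by positivity)
  have hr2 : (r ^ (-(((d : ℝ) - 2) / 2))) ^ 2 = r ^ (-((d : ℝ) - 2)) := by
    rw [← Real.rpow_natCast, ← Real.rpow_mul hr.le]
    congr 1
    push_cast
    ring
  rw [mul_pow, mul_pow, inv_pow, Real.sq_sqrt hk.le, Real.sq_sqrt hI0, hr2]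
  have hR : 0 < r ^ (-((d : ℝ) - 2)) := Real.rpow_pos_of_pos hr _
  have hd2 : (0 : ℝ) < (d : ℝ) - 2 := by linarith
  have hdpos : (0 : ℝ) < d := by linarith
  calc (f r) ^ 2 ≤ A * (r ^ (-((d : ℝ) - 2)) / ((d : ℝ) - 2)) := hsq
    _ = ((d : ℝ) * w * ((d : ℝ) - 2))⁻¹ * r ^ (-((d : ℝ) - 2)) * (d * (w * A)) := by
      field_simp
    _ ≤ _ := by gcongr
end
end

section
/- Radial pointwise decay estimate (Lemma 2.1, second part): Let d ≥ 3 and p > 1. There is a constant C depending only on d and p such that every radial function u : ℝ^d → ℝ which is continuously differentiable on ℝ^d∖{0}, satisfies ∫_{ℝ^d}|∇u(x)|² dx < ∞ and ∫_{ℝ^d}|u(x)|^{p+1} dx < ∞, and satisfies u(r) → 0 as r → ∞, obeys |u(r)| ≤ C r^{−2(d−1)/(p+3)} (∫_{ℝ^d}|∇u|²dx)^{1/(p+3)} (∫_{ℝ^d}|u|^{p+1}dx)^{1/(p+3)} for all r > 0. -/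
/-!
The function `|f|^q` with `q = (p+3)/2` has derivative bounded by `q |f'| |f|^((p+1)/2)`. Since `f`
vanishes at infinity, integrating over `(r, ∞)` and inserting the weight `(s/r)^(d-1) ≥ 1` gives
`|f r|^q ≤ q r^(-(d-1)) ∫₀^∞ s^(d-1) |f' s| |f s|^((p+1)/2) ds`
(`abs_rpow_le_weighted_integral`). In polar coordinates the integral on the right is a dimensional
constant times the integral over `ℝ^d` of `|f'(‖x‖)| |u x|^((p+1)/2)`. As
`|f'(‖x‖)| ≤ ‖∇u x‖` (`abs_deriv_profile_le`), Cauchy-Schwarz (`integral_sqrt_mul_sqrt_le`) bounds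
the latter by `(∫ ‖∇u‖²)^(1/2) (∫ |u|^(p+1))^(1/2)`, and raising to the power `1/q = 2/(p+3)`
yields the claim.
-/

noncomputable section

open MeasureTheory Filter

/-- Cauchy-Schwarz, phrased for square roots of integrable functions so that measurability of
the factors is inherited from integrability. -/
lemma integral_sqrt_mul_sqrt_le {α : Type*} [MeasurableSpace α] {μ : Measure α} {A B : α → ℝ}
    (hA : Integrable A μ) (hB : Integrable B μ) (hA0 : ∀ x, 0 ≤ A x) (hB0 : ∀ x, 0 ≤ B x) :
    Integrable (fun x => √(A x) * √(B x)) μ ∧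
      ∫ x, √(A x) * √(B x) ∂μ ≤ √(∫ x, A x ∂μ) * √(∫ x, B x ∂μ) := by
  have key : ∀ F : α → ℝ, Integrable F μ → (∀ x, 0 ≤ F x) → MemLp (fun x => √(F x)) 2 μ := by
    intro F hF hF0
    rw [memLp_two_iff_integrable_sq
      (Real.continuous_sqrt.comp_aestronglyMeasurable hF.aestronglyMeasurable)]
    simpa only [Real.sq_sqrt (hF0 _)] using hF
  have hA2 := key A hA hA0
  have hB2 := key B hB hB0
  refine ⟨hA2.integrable_mul hB2, ?_⟩
  have h := integral_mul_le_Lp_mul_Lq_of_nonneg (μ := μ) Real.HolderConjugate.two_two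
    (f := fun x => √(A x)) (g := fun x => √(B x))
    (Eventually.of_forall fun x => Real.sqrt_nonneg _)
    (Eventually.of_forall fun x => Real.sqrt_nonneg _)
    (by simpa using hA2) (by simpa using hB2)
  simpa only [Real.rpow_two, Real.sq_sqrt (hA0 _), Real.sq_sqrt (hB0 _),
    ← Real.sqrt_eq_rpow] using h

lemma hasDerivAt_profile {E : Type*} [NormedAddCommGroup E] [NormedSpace ℝ E]
    {u : E → ℝ} {f : ℝ → ℝ} (huf : ∀ x, u x = f ‖x‖) {x : E} (hx : x ≠ 0)
    (hu : DifferentiableAt ℝ u x) :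
    HasDerivAt f (fderiv ℝ u x (‖x‖⁻¹ • x)) ‖x‖ := by
  have hn : ‖x‖ ≠ 0 := norm_ne_zero_iff.2 hx
  have hx1 : ‖x‖ • (‖x‖⁻¹ • x) = x := smul_inv_smul₀ hn x
  have hline : HasDerivAt (fun s : ℝ => s • (‖x‖⁻¹ • x)) (‖x‖⁻¹ • x) ‖x‖ := by
    simpa using (hasDerivAt_id ‖x‖).smul_const (‖x‖⁻¹ • x)
  have hu' : HasFDerivAt u (fderiv ℝ u x) (‖x‖ • (‖x‖⁻¹ • x)) := by
    rw [hx1]; exact hu.hasFDerivAt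
  refine (hu'.comp_hasDerivAt ‖x‖ hline).congr_of_eventuallyEq ?_
  filter_upwards [lt_mem_nhds (norm_pos_iff.2 hx)] with s hs
  simp only [Function.comp_apply, huf, norm_smul, norm_inv, norm_norm, inv_mul_cancel₀ hn,
    mul_one, Real.norm_of_nonneg hs.le]

lemma abs_deriv_profile_le {E : Type*} [NormedAddCommGroup E] [InnerProductSpace ℝ E]
    [CompleteSpace E] {u : E → ℝ} {f : ℝ → ℝ} (huf : ∀ x, u x = f ‖x‖) {x : E} (hx : x ≠ 0)
    (hu : DifferentiableAt ℝ u x) : |deriv f ‖x‖| ≤ ‖gradient u x‖ := by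
  have hn : ‖x‖ ≠ 0 := norm_ne_zero_iff.2 hx
  rw [(hasDerivAt_profile huf hx hu).deriv, ← Real.norm_eq_abs, gradient,
    LinearIsometryEquiv.norm_map]
  refine ((fderiv ℝ u x).le_opNorm _).trans_eq ?_
  rw [norm_smul, norm_inv, norm_norm, inv_mul_cancel₀ hn, mul_one]

/-- The one-dimensional estimate: the fundamental theorem of calculus for `|f|^((p+3)/2)` on
`(r, ∞)`, with the weight `s^n` inserted at the cost of a factor `r^(-n)`. -/
lemma abs_rpow_le_weighted_integral {f : ℝ → ℝ} {p : ℝ} (hp : 1 < p) (n : ℕ)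
    (hf : ∀ s, 0 < s → DifferentiableAt ℝ f s) (hlim : Tendsto f atTop (nhds 0))
    (hint : IntegrableOn (fun s => s ^ n * (|deriv f s| * √(|f s| ^ (p + 1)))) (Set.Ioi 0))
    {r : ℝ} (hr : 0 < r) :
    |f r| ^ ((p + 3) / 2) ≤ (p + 3) / 2 * (r ^ n)⁻¹ *
      ∫ s in Set.Ioi (0 : ℝ), s ^ n * (|deriv f s| * √(|f s| ^ (p + 1))) := by
  set q := (p + 3) / 2 with hq
  have hq1 : 1 < q := by rw [hq]; linarith
  set g : ℝ → ℝ := fun s => q * |f s| ^ (q - 2) * f s * deriv f s with hg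
  set W : ℝ → ℝ := fun s => s ^ n * (|deriv f s| * √(|f s| ^ (p + 1))) with hW
  have hderiv : ∀ s ∈ Set.Ici r, HasDerivAt (fun s => |f s| ^ q) (g s) s := fun s hs =>
    (hasDerivAt_abs_rpow (f s) hq1).comp s (hf s (hr.trans_le hs)).hasDerivAt
  have hgabs : ∀ s, |g s| = q * (|deriv f s| * √(|f s| ^ (p + 1))) := by
    intro s
    have h1 : √(|f s| ^ (p + 1)) = |f s| ^ (q - 2) * |f s| := by
      rw [← Real.rpow_add_one' (abs_nonneg _) (by linarith), Real.sqrt_eq_rpow,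
        ← Real.rpow_mul (abs_nonneg _)]
      congr 1
      rw [hq]; ring
    rw [h1, hg]
    simp only [abs_mul, abs_of_pos (zero_lt_one.trans hq1),
      abs_of_nonneg (Real.rpow_nonneg (abs_nonneg (f s)) (q - 2))]
    ring
  have hgW : ∀ s ∈ Set.Ioi r, ‖g s‖ ≤ q * (r ^ n)⁻¹ * W s := by
    intro s hs
    have h1 : 1 ≤ (r ^ n)⁻¹ * s ^ n := by
      rw [← div_eq_inv_mul, one_le_div (pow_pos hr n)]
      exact pow_le_pow_left₀ hr.le (le_of_lt hs) n
    have h2 : 0 ≤ |g s| := abs_nonneg _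
    rw [Real.norm_eq_abs]
    calc |g s| ≤ ((r ^ n)⁻¹ * s ^ n) * |g s| := le_mul_of_one_le_left h2 h1
      _ = q * (r ^ n)⁻¹ * W s := by rw [hgabs, hW]; ring
  have hWr : IntegrableOn (fun s => q * (r ^ n)⁻¹ * W s) (Set.Ioi r) :=
    (hint.mono_set (Set.Ioi_subset_Ioi hr.le)).const_mul _
  have hgint : IntegrableOn g (Set.Ioi r) := by
    refine Integrable.mono' hWr ?_ ((ae_restrict_iff' measurableSet_Ioi).2
      (Eventually.of_forall hgW))
    have hfm : AEMeasurable f (volume.restrict (Set.Ioi r)) :=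
      ContinuousOn.aemeasurable (fun s hs =>
        (hf s (hr.trans hs)).continuousAt.continuousWithinAt) measurableSet_Ioi
    have hdm := (measurable_deriv f).aemeasurable (μ := volume.restrict (Set.Ioi r))
    have habs : AEMeasurable (fun s => |f s|) (volume.restrict (Set.Ioi r)) :=
      measurable_norm.comp_aemeasurable hfm
    exact ((((habs.pow_const (q - 2)).const_mul q).mul hfm).mul hdm).aestronglyMeasurable
  have hlim' : Tendsto (fun s => |f s| ^ q) atTop (nhds 0) := by
    have h := hlim.abs.rpow_const (p := q) (Or.inr (by linarith))
    simpa [Real.zero_rpow (by linarith : q ≠ 0)] using h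
  have hftc := integral_Ioi_of_hasDerivAt_of_tendsto' hderiv hgint hlim'
  have hWnn : ∀ s ∈ Set.Ioi (0 : ℝ), 0 ≤ W s := fun s hs =>
    mul_nonneg (pow_nonneg (le_of_lt hs) n) (mul_nonneg (abs_nonneg _) (Real.sqrt_nonneg _))
  calc |f r| ^ q = -∫ s in Set.Ioi r, g s := by rw [hftc]; ring
    _ ≤ ‖∫ s in Set.Ioi r, g s‖ := neg_le_abs _
    _ ≤ ∫ s in Set.Ioi r, q * (r ^ n)⁻¹ * W s :=
        norm_integral_le_of_norm_le hWr ((ae_restrict_iff' measurableSet_Ioi).2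
          (Eventually.of_forall hgW))
    _ = q * (r ^ n)⁻¹ * ∫ s in Set.Ioi r, W s := integral_const_mul _ _
    _ ≤ q * (r ^ n)⁻¹ * ∫ s in Set.Ioi (0 : ℝ), W s := by
        refine mul_le_mul_of_nonneg_left ?_ (by positivity)
        exact setIntegral_mono_set hint ((ae_restrict_iff' measurableSet_Ioi).2
          (Eventually.of_forall hWnn)) (Set.Ioi_subset_Ioi hr.le).eventuallyLE

/-- **Radial pointwise decay estimate (Lemma 2.1, second part).** For `d ≥ 3` and `p > 1`
there is a constant `C = C(d,p)` such that every radial function `u` with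
`∇u ∈ L²` and `u ∈ L^{p+1}` (with radial profile `f`, `C¹` away from the origin and
vanishing at spatial infinity) satisfies
`|u(r)| ≤ C r^{−2(d−1)/(p+3)} (∫|∇u|²)^{1/(p+3)} (∫|u|^{p+1})^{1/(p+3)}` for all `r > 0`. -/
theorem radial_pointwise_decay_estimate (d : ℕ) (hd : 3 ≤ d) (p : ℝ) (hp : 1 < p) :
    ∃ C : ℝ, 0 < C ∧
      ∀ (u : EuclideanSpace ℝ (Fin d) → ℝ) (f : ℝ → ℝ),
        (∀ x : EuclideanSpace ℝ (Fin d), u x = f ‖x‖) →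
        ContDiffOn ℝ 1 u {x : EuclideanSpace ℝ (Fin d) | x ≠ 0} →
        Integrable (fun x : EuclideanSpace ℝ (Fin d) => ‖gradient u x‖ ^ 2) →
        Integrable (fun x : EuclideanSpace ℝ (Fin d) => |u x| ^ (p + 1)) →
        Tendsto f atTop (nhds 0) →
        ∀ r : ℝ, 0 < r →
          |f r| ≤ C * r ^ (-(2 * ((d : ℝ) - 1) / (p + 3)))
            * (∫ x : EuclideanSpace ℝ (Fin d), ‖gradient u x‖ ^ 2) ^ ((1 : ℝ) / (p + 3))
            * (∫ x : EuclideanSpace ℝ (Fin d), |u x| ^ (p + 1)) ^ ((1 : ℝ) / (p + 3)) := by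
  have : NeZero d := ⟨by omega⟩
  set q := (p + 3) / 2 with hq
  have hq0 : 0 < q := by rw [hq]; linarith
  -- `c` is the surface area of the unit sphere, which appears in polar coordinates.
  set c : ℝ := d * volume.real (Metric.ball (0 : EuclideanSpace ℝ (Fin d)) 1) with hc
  have hc0 : 0 < c := by
    refine mul_pos (by exact_mod_cast (by omega : 0 < d)) ?_
    exact ENNReal.toReal_pos (Metric.measure_ball_pos _ _ one_pos).ne' measure_ball_lt_top.ne
  refine ⟨(q / c) ^ (1 / q), by positivity, ?_⟩
  intro u f huf hu hG hU hlim r hr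
  have hdiff : ∀ x : EuclideanSpace ℝ (Fin d), x ≠ 0 → DifferentiableAt ℝ u x := fun x hx =>
    (hu.differentiableOn one_ne_zero).differentiableAt (isOpen_ne.mem_nhds hx)
  have hf : ∀ s, 0 < s → DifferentiableAt ℝ f s := by
    intro s hs
    have hns : ‖(EuclideanSpace.single 0 s : EuclideanSpace ℝ (Fin d))‖ = s := by
      simp [abs_of_pos hs]
    have hs0 : (EuclideanSpace.single 0 s : EuclideanSpace ℝ (Fin d)) ≠ 0 := by
      rw [← norm_ne_zero_iff, hns]; exact hs.ne'
    have h := (hasDerivAt_profile huf hs0 (hdiff _ hs0)).differentiableAt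
    rwa [hns] at h
  set h : ℝ → ℝ := fun s => |deriv f s| * √(|f s| ^ (p + 1)) with hh
  obtain ⟨hCSint, hCS⟩ := integral_sqrt_mul_sqrt_le hG hU (fun x => by positivity)
    (fun x => by positivity)
  have hle : ∀ᵐ x : EuclideanSpace ℝ (Fin d),
      h ‖x‖ ≤ √(‖gradient u x‖ ^ 2) * √(|u x| ^ (p + 1)) := by
    filter_upwards [(Set.countable_singleton (0 : EuclideanSpace ℝ (Fin d))).ae_notMem volume]
      with x hx
    rw [Real.sqrt_sq (norm_nonneg _), huf x]
    exact mul_le_mul_of_nonneg_right (abs_deriv_profile_le huf hx (hdiff x hx))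
      (Real.sqrt_nonneg _)
  have hhint : Integrable (fun x : EuclideanSpace ℝ (Fin d) => h ‖x‖) := by
    refine hCSint.mono' ?_ ?_
    · have h1 : AEStronglyMeasurable (fun x : EuclideanSpace ℝ (Fin d) => |deriv f ‖x‖|) :=
        ((measurable_norm.comp (measurable_deriv f)).comp
          measurable_norm).aestronglyMeasurable
      have h2 := Real.continuous_sqrt.comp_aestronglyMeasurable hU.aestronglyMeasurable
      simpa only [hh, huf] using! h1.mul h2
    · filter_upwards [hle] with x hx
      rwa [Real.norm_of_nonneg (mul_nonneg (abs_nonneg _) (Real.sqrt_nonneg _))]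
  have hpolar := integral_fun_norm_addHaar
    (volume : Measure (EuclideanSpace ℝ (Fin d))) h
  have hrad := (integrable_fun_norm_addHaar
    (volume : Measure (EuclideanSpace ℝ (Fin d))) (f := h)).1 hhint
  simp only [finrank_euclideanSpace_fin, smul_eq_mul, nsmul_eq_mul, ← mul_assoc] at hpolar
  simp only [finrank_euclideanSpace_fin, smul_eq_mul] at hrad
  have h1d := abs_rpow_le_weighted_integral hp (d - 1) hf hlim hrad hr
  set G := ∫ x : EuclideanSpace ℝ (Fin d), ‖gradient u x‖ ^ 2 with hGdef
  set U := ∫ x : EuclideanSpace ℝ (Fin d), |u x| ^ (p + 1) with hUdef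
  have hG0 : 0 ≤ G := integral_nonneg fun x => by positivity
  have hU0 : 0 ≤ U := integral_nonneg fun x => by positivity
  set J := ∫ s in Set.Ioi (0 : ℝ), s ^ (d - 1) * (|deriv f s| * √(|f s| ^ (p + 1))) with hJ
  have hcJ : c * J ≤ √G * √U := by
    have hcJ' : c * J = ∫ x : EuclideanSpace ℝ (Fin d), h ‖x‖ := by
      rw [hpolar, hc, hJ]
    rw [hcJ']
    exact (integral_mono_ae hhint hCSint hle).trans hCS
  have hmain : |f r| ^ q ≤ q / c * (r ^ (d - 1))⁻¹ * √G * √U := by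
    refine h1d.trans ?_
    have h1 : J ≤ √G * √U / c := by rw [le_div_iff₀ hc0, mul_comm]; exact hcJ
    calc q * (r ^ (d - 1))⁻¹ * J ≤ q * (r ^ (d - 1))⁻¹ * (√G * √U / c) :=
          mul_le_mul_of_nonneg_left h1 (by positivity)
      _ = _ := by ring
  have hroot := Real.rpow_le_rpow (by positivity) hmain (z := 1 / q) (by positivity)
  rw [← Real.rpow_mul (abs_nonneg _), mul_one_div_cancel hq0.ne', Real.rpow_one,
    Real.mul_rpow (by positivity) (by positivity), Real.mul_rpow (by positivity) (by positivity),
    Real.mul_rpow (by positivity) (by positivity)] at hroot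
  have hrp : ((r ^ (d - 1))⁻¹) ^ (1 / q) = r ^ (-(2 * ((d : ℝ) - 1) / (p + 3))) := by
    rw [← Real.rpow_natCast, ← Real.rpow_neg hr.le, ← Real.rpow_mul hr.le,
      Nat.cast_sub (by omega : 1 ≤ d), hq]
    congr 1
    have : p + 3 ≠ 0 := by linarith
    push_cast
    field_simp
  have hsq : ∀ y : ℝ, 0 ≤ y → √y ^ (1 / q) = y ^ ((1 : ℝ) / (p + 3)) := by
    intro y hy
    rw [Real.sqrt_eq_rpow, ← Real.rpow_mul hy, hq]
    congr 1
    have : p + 3 ≠ 0 := by linarith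
    field_simp
  rwa [hrp, hsq G hG0, hsq U hU0] at hroot
end
end

section
/- Local Hardy inequality with boundary term (Lemma 4.1, first part): Let d ≥ 3, a > −(d−2)²/4, and set σ = (d−2)/2 − √((d−2)²/4 + a). Let R > 0 and let u : ℝ^d → ℝ be continuously differentiable on ℝ^d∖{0} with ∫_{|x|<R}(|∇u(x)|² + |x|^{−2}|u(x)|²)dx < ∞. Then f(R) := ∫_{|x|<R}(|∇u(x)|² + a|u(x)|²/|x|²)dx + σ ∫_{|x|=R} (|u(x)|²/|x|) dS(x) satisfies the identity f(R) = ∫_{|x|<R} |∇u(x) + σ (x/|x|²) u(x)|² dx; in particular f(R) ≥ 0. -/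
/-!
Expanding the square gives, away from the origin,
`|∇u + σ x u / |x|²|² = |∇u|² + 2 σ u (∇u · x) / |x|² + σ² u² / |x|²`.
Since `a = σ² - (d - 2) σ`, the right-hand side differs from `|∇u|² + a u² / |x|²` by `σ` times
`(d - 2) u² / |x|² + 2 u (∇u · x) / |x|²`, the divergence of `x u² / |x|²`. The identity is thus
the divergence theorem for this field (`boundary_identity`), with no contribution from the origin;
nonnegativity follows at once.

The field is radial, so in polar coordinates (`polar_ball`) the divergence theorem reduces to the
fundamental theorem of calculus for `g r = r ^ (d - 2) * u (r ω) ^ 2` on almost every ray. The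
finite energy assumption makes both `g'` and `g r / r` integrable on `(0, R)` for almost every `ω`,
and this forces `g r → 0` as `r → 0` (`radial_ftc`).
-/


noncomputable section

open MeasureTheory Metric

/-- The surface integral `∫_{|x|=R} g dS` over the sphere of radius `R` in `ℝ^d`,
expressed via the surface measure `volume.toSphere` on the unit sphere. -/
def sphereIntegral (d : ℕ) (R : ℝ) (g : EuclideanSpace ℝ (Fin d) → ℝ) : ℝ :=
  R ^ (d - 1) * ∫ ω : Metric.sphere (0 : EuclideanSpace ℝ (Fin d)) 1,
    g (R • (ω : EuclideanSpace ℝ (Fin d)))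
      ∂((volume : Measure (EuclideanSpace ℝ (Fin d))).toSphere)

open Set Filter Topology

/-- Integration in polar coordinates of an integrable function, together with its integrability
along almost every ray. -/
theorem polar_integrable {E : Type*} [NormedAddCommGroup E] [NormedSpace ℝ E]
    [MeasurableSpace E] [BorelSpace E] [FiniteDimensional ℝ E] [Nontrivial E]
    (μ : Measure E) [μ.IsAddHaarMeasure] {f : E → ℝ} (hf : Integrable f μ) :
    (∀ᵐ ω : sphere (0 : E) 1 ∂μ.toSphere,
      IntegrableOn (fun r : ℝ => r ^ (Module.finrank ℝ E - 1) * f (r • (ω : E))) (Ioi 0)) ∧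
    ∫ x, f x ∂μ = ∫ ω : sphere (0 : E) 1,
      (∫ r in Ioi (0 : ℝ), r ^ (Module.finrank ℝ E - 1) * f (r • (ω : E))) ∂μ.toSphere := by
  set n := Module.finrank ℝ E - 1 with hn
  let g : sphere (0 : E) 1 × Ioi (0 : ℝ) → ℝ := fun p => f ((p.2 : ℝ) • (p.1 : E))
  have hg : ∀ x : ({0}ᶜ : Set E), g (homeomorphUnitSphereProd E x) = f x := by
    intro x
    have hx : ‖(x : E)‖ ≠ 0 := norm_ne_zero_iff.2 x.2
    simp [g, smul_smul, hx]
  have hmp := μ.measurePreserving_homeomorphUnitSphereProd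
  have hemb := Homeomorph.measurableEmbedding (homeomorphUnitSphereProd E)
  have hgi : Integrable g (μ.toSphere.prod (Measure.volumeIoiPow n)) := by
    rw [← hmp.integrable_comp_emb hemb]
    have : g ∘ homeomorphUnitSphereProd E = f ∘ Subtype.val := funext hg
    rw [this, ← integrableOn_iff_comap_subtypeVal (measurableSet_singleton _).compl]
    exact hf.integrableOn
  have hdens : ∀ h : ℝ → ℝ, Integrable (fun r : Ioi (0 : ℝ) => h r) (Measure.volumeIoiPow n) ↔
      IntegrableOn (fun r => r ^ n * h r) (Ioi 0) := by
    intro h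
    rw [integrableOn_iff_comap_subtypeVal measurableSet_Ioi, Measure.volumeIoiPow,
      integrable_withDensity_iff_integrable_smul' (by fun_prop) (by simp)]
    refine integrable_congr (.of_forall ?_)
    rintro ⟨x, hx : 0 < x⟩
    simp [ENNReal.toReal_ofReal (pow_nonneg hx.le n)]
  have hint : ∀ h : ℝ → ℝ, ∫ r : Ioi (0 : ℝ), h r ∂(Measure.volumeIoiPow n) =
      ∫ r in Ioi (0 : ℝ), r ^ n * h r := by
    intro h
    simp only [Measure.volumeIoiPow, ENNReal.ofReal]
    rw [integral_withDensity_eq_integral_smul (by fun_prop),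
      integral_subtype_comap measurableSet_Ioi fun a ↦ Real.toNNReal (a ^ n) • h a]
    refine setIntegral_congr_fun measurableSet_Ioi fun x hx ↦ ?_
    simp only [NNReal.smul_def, Real.coe_toNNReal _ (pow_nonneg (le_of_lt hx) n), smul_eq_mul]
  constructor
  · filter_upwards [hgi.prod_right_ae] with ω hω
    exact (hdens fun r => f (r • (ω : E))).1 hω
  · calc ∫ x, f x ∂μ = ∫ x : ({0}ᶜ : Set E), f x ∂(μ.comap (↑)) := by
          rw [integral_subtype_comap (measurableSet_singleton _).compl f,
            restrict_compl_singleton]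
      _ = ∫ p, g p ∂(μ.toSphere.prod (Measure.volumeIoiPow n)) := by
          rw [← hmp.integral_comp hemb]
          exact integral_congr_ae (.of_forall fun x => (hg x).symm)
      _ = _ := by
          rw [integral_prod _ hgi]
          exact integral_congr_ae (.of_forall fun ω => hint fun r => f (r • (ω : E)))

/-- `polar_integrable` for a function integrable on a ball centred at the origin. -/
theorem polar_ball {E : Type*} [NormedAddCommGroup E] [NormedSpace ℝ E]
    [MeasurableSpace E] [BorelSpace E] [FiniteDimensional ℝ E] [Nontrivial E]
    (μ : Measure E) [μ.IsAddHaarMeasure] {f : E → ℝ} {R : ℝ} (hf : IntegrableOn f (ball 0 R) μ) :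
    (∀ᵐ ω : sphere (0 : E) 1 ∂μ.toSphere,
      IntegrableOn (fun r : ℝ => r ^ (Module.finrank ℝ E - 1) * f (r • (ω : E))) (Ioo 0 R)) ∧
    ∫ x in ball 0 R, f x ∂μ = ∫ ω : sphere (0 : E) 1,
      (∫ r in Ioo 0 R, r ^ (Module.finrank ℝ E - 1) * f (r • (ω : E))) ∂μ.toSphere := by
  set n := Module.finrank ℝ E - 1
  have key : ∀ ω : sphere (0 : E) 1, EqOn
      (fun r : ℝ => r ^ n * (ball (0 : E) R).indicator f (r • (ω : E)))
      ((Iio R).indicator fun r : ℝ => r ^ n * f (r • (ω : E))) (Ioi 0) := by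
    intro ω r (hr : 0 < r)
    have hω : ‖(ω : E)‖ = 1 := by simp
    by_cases h : r < R <;> simp [indicator, norm_smul, abs_of_pos hr, h]
  obtain ⟨h1, h2⟩ := polar_integrable μ (hf.integrable_indicator measurableSet_ball)
  constructor
  · filter_upwards [h1] with ω hω
    have := (integrableOn_congr_fun (key ω) measurableSet_Ioi).1 hω
    rw [IntegrableOn, integrable_indicator_iff measurableSet_Iio, IntegrableOn,
      Measure.restrict_restrict measurableSet_Iio, inter_comm, Ioi_inter_Iio] at this
    exact this
  · rw [← integral_indicator measurableSet_ball, h2]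
    refine integral_congr_ae (.of_forall fun ω => ?_)
    simp only
    rw [setIntegral_congr_fun measurableSet_Ioi (key ω), setIntegral_indicator measurableSet_Iio,
      Ioi_inter_Iio]

/-- The fundamental theorem of calculus on `(0, R)` without a boundary term at `0`. Integrability
of `g'` gives `g` a limit at `0`, and integrability of `g r / r` forces this limit to vanish,
because `1 / r` is not integrable near `0`. -/
theorem radial_ftc {g g' : ℝ → ℝ} {R : ℝ} (hR : 0 < R)
    (hd : ∀ r, 0 < r → HasDerivAt g (g' r) r) (h0 : ∀ r, 0 < r → 0 ≤ g r)
    (hi : IntegrableOn g' (Ioo 0 R)) (hi' : IntegrableOn (fun r => g r / r) (Ioo 0 R)) :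
    ∫ r in Ioo 0 R, g' r = g R := by
  have hI : IntegrableOn g' (Icc 0 R) := by
    rwa [integrableOn_Icc_iff_integrableOn_Ioo]
  have hII : IntervalIntegrable g' volume 0 R :=
    (intervalIntegrable_iff_integrableOn_Ioo_of_le hR.le).2 hi
  set L := g R - ∫ r in (0 : ℝ)..R, g' r with hL
  have hftc : ∀ r ∈ Ioo 0 R, g r = g R - ∫ t in r..R, g' t := by
    intro r hr
    rw [intervalIntegral.integral_eq_sub_of_hasDerivAt]
    · ring
    · intro x hx
      rw [uIcc_of_le hr.2.le] at hx
      exact hd x (hr.1.trans_le hx.1)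
    · refine hII.mono_set ?_
      rw [uIcc_of_le hr.2.le, uIcc_of_le hR.le]
      exact Icc_subset_Icc_left hr.1.le
  have hlim : Tendsto g (𝓝[>] 0) (𝓝 L) := by
    have hc := intervalIntegral.continuousOn_primitive_interval_left (μ := volume)
      (f := g') (a := 0) (b := R) (by rwa [uIcc_of_le hR.le])
    rw [uIcc_of_le hR.le] at hc
    have h1 := (hc 0 (left_mem_Icc.2 hR.le)).mono Ioo_subset_Icc_self
    rw [ContinuousWithinAt, nhdsWithin_Ioo_eq_nhdsGT hR] at h1
    refine (h1.const_sub (g R)).congr' ?_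
    filter_upwards [Ioo_mem_nhdsGT hR] with r hr using (hftc r hr).symm
  have hL0 : 0 ≤ L := ge_of_tendsto hlim (by
    filter_upwards [self_mem_nhdsWithin] with r hr using h0 r hr)
  have : L = 0 := by
    by_contra hne
    have hpos : 0 < L := lt_of_le_of_ne hL0 (Ne.symm hne)
    have hev : ∀ᶠ r in 𝓝[>] (0:ℝ), L / 2 < g r := hlim.eventually_const_lt (by linarith)
    obtain ⟨ε, hε, hεs⟩ := (mem_nhdsGT_iff_exists_Ioo_subset).1 hev
    have hε : 0 < ε := hε
    set δ := min ε R
    have hδ : 0 < δ := lt_min hε hR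
    have hinv : IntegrableOn (fun r : ℝ => r⁻¹) (Ioo 0 δ) := by
      have hs : Ioo 0 δ ⊆ Ioo 0 R := Ioo_subset_Ioo_right (min_le_right _ _)
      refine ((hi'.mono_set hs).const_mul (2 / L)).mono' measurable_inv.aestronglyMeasurable ?_
      filter_upwards [ae_restrict_mem measurableSet_Ioo] with r hr
      have hg : L / 2 < g r := hεs ⟨hr.1, hr.2.trans_le (min_le_left _ _)⟩
      rw [Real.norm_of_nonneg (inv_nonneg.2 hr.1.le), ← mul_div_assoc, inv_eq_one_div]
      gcongr
      · exact hr.1.le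
      · rw [div_mul_eq_mul_div, le_div_iff₀ hpos]; linarith
    have := (intervalIntegrable_iff_integrableOn_Ioo_of_le hδ.le).2 hinv
    rw [intervalIntegrable_inv_iff] at this
    simp [hδ.ne] at this
  rw [← integral_Ioc_eq_integral_Ioo, ← intervalIntegral.integral_of_le hR.le]
  linarith

/-- The divergence theorem on the punctured ball for the field `x u² / |x|²`, whose divergence is
`(d - 2) u² / |x|² + 2 u (∇u · x) / |x|²`; here `d = n + 3`. On the ray through the unit vector `ω`
it is `radial_ftc` for `g r = r ^ (d - 2) * u (r ω) ^ 2`. -/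
theorem boundary_identity (n : ℕ) {R : ℝ} (hR : 0 < R)
    {u : EuclideanSpace ℝ (Fin (n + 3)) → ℝ}
    (hu : ∀ x, x ≠ 0 → DifferentiableAt ℝ u x)
    (hV : IntegrableOn (fun x => u x ^ 2 / ‖x‖ ^ 2) (ball 0 R))
    (hW : IntegrableOn (fun x => u x * inner ℝ (gradient u x) x / ‖x‖ ^ 2) (ball 0 R)) :
    ∫ x in ball (0 : EuclideanSpace ℝ (Fin (n + 3))) R,
        (((n : ℝ) + 1) * (u x ^ 2 / ‖x‖ ^ 2) + 2 * (u x * inner ℝ (gradient u x) x / ‖x‖ ^ 2))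
      = sphereIntegral (n + 3) R (fun x => u x ^ 2 / ‖x‖) := by
  obtain ⟨hF, hFint⟩ := polar_ball volume ((hV.const_mul ((n : ℝ) + 1)).add (hW.const_mul 2))
  obtain ⟨hV', -⟩ := polar_ball volume hV
  simp only [finrank_euclideanSpace_fin, Pi.add_apply] at hF hFint hV'
  rw [hFint, sphereIntegral, ← integral_const_mul]
  refine integral_congr_ae ?_
  filter_upwards [hF, hV'] with ω h1 h2
  have hω : ‖(ω : EuclideanSpace ℝ (Fin (n + 3)))‖ = 1 := by simp
  have hn : ∀ r : ℝ, 0 < r → ‖r • (ω : EuclideanSpace ℝ (Fin (n + 3)))‖ = r := by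
    intro r hr; rw [norm_smul, hω, Real.norm_of_nonneg hr.le, mul_one]
  rw [radial_ftc (g := fun r => r ^ (n + 1) * u (r • ω) ^ 2) hR ?_ ?_ h1 ?_]
  · simp only [hn R hR]
    rw [show n + 3 - 1 = n + 1 + 1 by omega, pow_succ R (n + 1)]
    field_simp
  · intro r hr
    have hne : r • (ω : EuclideanSpace ℝ (Fin (n + 3))) ≠ 0 := by
      rw [← norm_ne_zero_iff, hn r hr]; exact hr.ne'
    have hder : HasDerivAt (fun r : ℝ => u (r • (ω : EuclideanSpace ℝ (Fin (n + 3)))))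
        (inner ℝ (gradient u (r • ω)) (ω : EuclideanSpace ℝ (Fin (n + 3)))) r := by
      rw [inner_gradient_left]
      have h := (hasDerivAt_id r).smul_const (ω : EuclideanSpace ℝ (Fin (n + 3)))
      simp only [id, one_smul] at h
      exact (hu _ hne).hasFDerivAt.comp_hasDerivAt r h
    refine ((hasDerivAt_pow (n + 1) r).fun_mul (hder.fun_pow 2)).congr_deriv ?_
    rw [hn r hr, inner_smul_right, show n + 3 - 1 = n + 2 by omega,
      show n + 1 - 1 = n by omega]
    push_cast
    field_simp
    ring
  · intro r hr; positivity
  -- `g r / r = r ^ (d - 1) * u² / r²`, which is integrable on almost every ray by `hV`.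
  · refine h2.congr_fun (fun r hr => ?_) measurableSet_Ioo
    have hr0 : 0 < r := hr.1
    simp only [hn r hr0]
    rw [show n + 3 - 1 = n + 1 + 1 by omega]
    field_simp
    ring

/-- A function continuous off the origin is a.e. strongly measurable, whatever its value at `0`. -/
theorem aesm_of_continuousOn_compl {E : Type*} [NormedAddCommGroup E]
    [MeasurableSpace E] [BorelSpace E] [SecondCountableTopology E]
    (μ : Measure E) [NullSingletonClass μ] {f : E → ℝ}
    (hf : ContinuousOn f {0}ᶜ) : AEStronglyMeasurable f μ := by
  have := hf.aestronglyMeasurable (μ := μ) (measurableSet_singleton _).compl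
  rwa [restrict_compl_singleton] at this

/-- **Local Hardy inequality with boundary term (Lemma 4.1, first part).** For `d ≥ 3`,
`a > −(d−2)²/4` and `σ = (d−2)/2 − √((d−2)²/4 + a)`, the quantity
`f(R) = ∫_{|x|<R}(|∇u|² + a|u|²/|x|²)dx + σ∫_{|x|=R}|u|²/|x| dS`
equals `∫_{|x|<R} |∇u + σ(x/|x|²)u|² dx`; in particular `f(R) ≥ 0`. -/
theorem local_hardy_with_boundary (d : ℕ) (hd : 3 ≤ d) (a : ℝ)
    (ha : -((d : ℝ) - 2) ^ 2 / 4 < a)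
    (σ : ℝ) (hσ : σ = ((d : ℝ) - 2) / 2 - Real.sqrt (((d : ℝ) - 2) ^ 2 / 4 + a))
    (R : ℝ) (hR : 0 < R)
    (u : EuclideanSpace ℝ (Fin d) → ℝ)
    (hu : ContDiffOn ℝ 1 u {x : EuclideanSpace ℝ (Fin d) | x ≠ 0})
    (hint : IntegrableOn (fun x : EuclideanSpace ℝ (Fin d) =>
      ‖gradient u x‖ ^ 2 + (u x) ^ 2 / ‖x‖ ^ 2) (Metric.ball 0 R)) :
    ((∫ x in Metric.ball (0 : EuclideanSpace ℝ (Fin d)) R,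
        (‖gradient u x‖ ^ 2 + a * (u x) ^ 2 / ‖x‖ ^ 2))
      + σ * sphereIntegral d R (fun x => (u x) ^ 2 / ‖x‖)
      = ∫ x in Metric.ball (0 : EuclideanSpace ℝ (Fin d)) R,
          ‖gradient u x + (σ * u x / ‖x‖ ^ 2) • x‖ ^ 2)
    ∧ 0 ≤ (∫ x in Metric.ball (0 : EuclideanSpace ℝ (Fin d)) R,
        (‖gradient u x‖ ^ 2 + a * (u x) ^ 2 / ‖x‖ ^ 2))
      + σ * sphereIntegral d R (fun x => (u x) ^ 2 / ‖x‖) := by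
  obtain ⟨n, rfl⟩ : ∃ n, d = n + 3 := ⟨d - 3, by omega⟩
  -- `σ` is a root of `σ² - (d - 2) σ = a`, with `d - 2 = n + 1`.
  have haσ : a = σ ^ 2 - ((n : ℝ) + 1) * σ := by
    have hs := Real.sq_sqrt (show 0 ≤ ((((n + 3 : ℕ) : ℝ)) - 2) ^ 2 / 4 + a by linarith)
    push_cast at hs hσ
    rw [hσ]
    linear_combination -hs
  have hopen : IsOpen {x : EuclideanSpace ℝ (Fin (n + 3)) | x ≠ 0} := isOpen_ne
  have hdiff : ∀ x : EuclideanSpace ℝ (Fin (n + 3)), x ≠ 0 → DifferentiableAt ℝ u x :=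
    fun x hx => (hu.differentiableOn one_ne_zero).differentiableAt (hopen.mem_nhds hx)
  have hcu : ContinuousOn u {0}ᶜ := hu.continuousOn
  have hcg : ContinuousOn (gradient u) {0}ᶜ :=
    (InnerProductSpace.toDual ℝ _).symm.continuous.comp_continuousOn
      (hu.continuousOn_fderiv_of_isOpen hopen le_rfl)
  have hcn : ContinuousOn (fun x : EuclideanSpace ℝ (Fin (n + 3)) => ‖x‖ ^ 2) {0}ᶜ := by fun_prop
  have hn0 : ∀ x ∈ ({0}ᶜ : Set (EuclideanSpace ℝ (Fin (n + 3)))), ‖x‖ ^ 2 ≠ 0 :=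
    fun x hx => pow_ne_zero 2 (norm_ne_zero_iff.2 hx)
  have hG : IntegrableOn (fun x => ‖gradient u x‖ ^ 2) (ball 0 R) := by
    refine hint.mono' (aesm_of_continuousOn_compl volume (by fun_prop)).restrict
      (.of_forall fun x => ?_)
    rw [Real.norm_of_nonneg (by positivity)]
    have : 0 ≤ u x ^ 2 / ‖x‖ ^ 2 := by positivity
    linarith
  have hV : IntegrableOn (fun x => u x ^ 2 / ‖x‖ ^ 2) (ball 0 R) := by
    refine hint.mono' (aesm_of_continuousOn_compl volume ((hcu.pow 2).div hcn hn0)).restrict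
      (.of_forall fun x => ?_)
    rw [Real.norm_of_nonneg (by positivity)]
    have : 0 ≤ ‖gradient u x‖ ^ 2 := by positivity
    linarith
  have hW : IntegrableOn (fun x => u x * inner ℝ (gradient u x) x / ‖x‖ ^ 2) (ball 0 R) := by
    refine hint.mono' (aesm_of_continuousOn_compl volume
      ((hcu.mul (hcg.inner continuousOn_id)).div hcn hn0)).restrict (.of_forall fun x => ?_)
    rcases eq_or_ne x 0 with rfl | hx
    · simp
    have hx' : 0 < ‖x‖ := norm_pos_iff.2 hx
    have hci := abs_real_inner_le_norm (gradient u x) x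
    have h1 : ‖u x * inner ℝ (gradient u x) x / ‖x‖ ^ 2‖ ≤ ‖gradient u x‖ * (|u x| / ‖x‖) := by
      rw [Real.norm_eq_abs, abs_div, abs_mul, abs_of_pos (pow_pos hx' 2)]
      calc |u x| * |inner ℝ (gradient u x) x| / ‖x‖ ^ 2
          ≤ |u x| * (‖gradient u x‖ * ‖x‖) / ‖x‖ ^ 2 := by gcongr
        _ = _ := by field_simp
    have h2 : u x ^ 2 / ‖x‖ ^ 2 = (|u x| / ‖x‖) ^ 2 := by rw [div_pow, sq_abs]
    rw [h2]
    nlinarith [sq_nonneg (‖gradient u x‖ - |u x| / ‖x‖), sq_nonneg (‖gradient u x‖ + |u x| / ‖x‖)]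
  -- At `x = 0` both sides equal `‖∇u 0‖²`: every other term is divided by `‖x‖² = 0`.
  have hexp : ∀ x, ‖gradient u x + (σ * u x / ‖x‖ ^ 2) • x‖ ^ 2 =
      (‖gradient u x‖ ^ 2 + a * u x ^ 2 / ‖x‖ ^ 2) +
        σ * (((n : ℝ) + 1) * (u x ^ 2 / ‖x‖ ^ 2) +
          2 * (u x * inner ℝ (gradient u x) x / ‖x‖ ^ 2)) := by
    intro x
    rcases eq_or_ne x 0 with rfl | hx
    · simp
    have hx' : ‖x‖ ≠ 0 := norm_ne_zero_iff.2 hx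
    rw [norm_add_sq_real, inner_smul_right, norm_smul, mul_pow, Real.norm_eq_abs, sq_abs, haσ]
    field_simp
    ring
  have hmain : (∫ x in ball (0 : EuclideanSpace ℝ (Fin (n + 3))) R,
        (‖gradient u x‖ ^ 2 + a * (u x) ^ 2 / ‖x‖ ^ 2))
      + σ * sphereIntegral (n + 3) R (fun x => (u x) ^ 2 / ‖x‖)
      = ∫ x in ball (0 : EuclideanSpace ℝ (Fin (n + 3))) R,
          ‖gradient u x + (σ * u x / ‖x‖ ^ 2) • x‖ ^ 2 := by
    rw [← boundary_identity n hR hdiff hV hW, ← integral_const_mul, ← integral_add]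
    · simp only [hexp]
    · simp only [mul_div_assoc]
      exact hG.add (hV.const_mul a)
    · exact ((hV.const_mul _).add (hW.const_mul 2)).const_mul σ
  exact ⟨hmain, hmain ▸ integral_nonneg fun x => sq_nonneg _⟩
end
end

section
/- Energy flux bound through a full light cone (Proposition 3.1, inequality (3.6)): Let d ≥ 3, a > −(d−2)²/4, and 1 + 4/(d−1) ≤ p < 1 + 4/(d−2). There exists a constant C depending only on d, p, a such that for every finite-energy radial classical solution u of (NLW_a) with energy E and every η ∈ ℝ, ∫_η^∞ ∫_{|x|=t−η} ( |∂ᵣu + ∂ₜu|² + |u|²/|x|² + |u|^{p+1} )(x,t) dS(x) dt ≤ C E. -/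
/-! Write `d = m + 3`, `α = (d - 2) / 2`, and let `W(r, t)` be the radial profile of `u`. The
weighted energy density `P = r^(d-1) (½ Wᵣ² + ½ Wₜ² + ½ a W²/r² + |W|^(p+1)/(p+1))` and the
momentum density `Q = r^(d-1) Wᵣ Wₜ` satisfy `∂ₜP = ∂ᵣQ` (`RadSol.conservation`), so on the convex
set `r > 0` the form `P dr + Q dt` has a primitive `Φ` (`RadSol.exists_potential`), and every
energy–flux identity becomes an identity between values of `Φ`.

Hardy's inequality (`hardy_Ioi`) and `a > -α²` show that the energy controls the full norm at
each time (`RadSol.coercive`), hence also `r^(d-2) W²` pointwise (`RadSol.pointwise`). The flux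
of `Φ` along the outgoing cone `r = t - η` between radii `s` and `R` is compared with the
horizontal segments at the two end times, each worth at most a multiple of the energy
(`RadSol.horizontal`), and with an incoming ray at radius at least `R`, on which the flux density
is bounded below by the pointwise decay (`RadSol.incoming`). No boundary term at `r = 0` or at
infinity occurs.

The density of the flux along the outgoing cone is
`r^(d-1) (½ (Wᵣ + Wₜ)² + ½ a W²/r² + |W|^(p+1)/(p+1))`, where `Wᵣ + Wₜ` is the derivative of
`r ↦ W(r, r + η)`. A second use of Hardy's inequality, on `[s, R]` for this trace
(`hardy_interval`), turns it into a bound for the integrand of the theorem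
(`RadSol.flux_bound`), uniformly in `s` and `R`; then `s → 0` and `R → ∞`. -/

noncomputable section

open MeasureTheory Metric Filter Real Set

/-- The Laplacian of `f : ℝ^d → ℝ`, written as the sum of second partial derivatives
in the coordinate directions. -/
def lap {d : ℕ} (f : EuclideanSpace ℝ (Fin d) → ℝ) (x : EuclideanSpace ℝ (Fin d)) : ℝ :=
  ∑ i : Fin d, fderiv ℝ (fun y => fderiv ℝ f y (EuclideanSpace.single i 1)) x
    (EuclideanSpace.single i 1)

/-- A finite-energy radial classical solution of the defocusing nonlinear wave equation
with inverse-square potential `∂ₜ²u − Δu + a|x|⁻²u = −|u|^{p−1}u` on `ℝ^d`. -/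
structure Sol (d : ℕ) (a p : ℝ) where
  /-- the solution, as a function of `(x, t)` -/
  u : EuclideanSpace ℝ (Fin d) → ℝ → ℝ
  /-- the radial profile: `u(x,t)` depends on `x` only through `r = |x|` -/
  rad : ℝ → ℝ → ℝ
  u_eq_rad : ∀ (x : EuclideanSpace ℝ (Fin d)) (t : ℝ), u x t = rad ‖x‖ t
  smooth : ContDiffOn ℝ 2 (fun q : EuclideanSpace ℝ (Fin d) × ℝ => u q.1 q.2)
    {q : EuclideanSpace ℝ (Fin d) × ℝ | q.1 ≠ 0}
  pde : ∀ (x : EuclideanSpace ℝ (Fin d)) (t : ℝ), x ≠ 0 →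
    deriv (deriv (u x)) t - lap (fun y => u y t) x + a * u x t / ‖x‖ ^ 2
      = -(|u x t| ^ (p - 1) * u x t)
  finite : ∀ t : ℝ, Integrable (fun x : EuclideanSpace ℝ (Fin d) =>
    ‖gradient (fun y => u y t) x‖ ^ 2 + (u x t) ^ 2 / ‖x‖ ^ 2
      + (deriv (u x) t) ^ 2 + |u x t| ^ (p + 1))
  /-- the (conserved) energy -/
  energy : ℝ
  energy_def : ∀ t : ℝ, energy = ∫ x : EuclideanSpace ℝ (Fin d),
    ((1:ℝ)/2 * ‖gradient (fun y => u y t) x‖ ^ 2 + a / 2 * (u x t) ^ 2 / ‖x‖ ^ 2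
      + 1/2 * (deriv (u x) t) ^ 2 + 1/(p+1) * |u x t| ^ (p + 1))

section Aux

open scoped Topology

/-! ### One-dimensional inequalities -/

lemma weighted_sq_le (m : ℕ) (v v' : ℝ → ℝ) (hv : ∀ r, 0 < r → HasDerivAt v (v' r) r)
    (hc : ContinuousOn v' (Ioi 0)) {R : ℝ} (hR : 0 < R) :
    R ^ (m + 1) * v R ^ 2 ≤ 2 * ∫ r in R..2 * R, (r ^ (m + 2) * v' r ^ 2 + r ^ m * v r ^ 2) := by
  have hsub : uIcc R (2 * R) ⊆ Ioi 0 := by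
    rw [uIcc_of_le (by linarith)]
    exact fun x hx => lt_of_lt_of_le hR hx.1
  have hvc : ContinuousOn v (Ioi 0) := fun r hr => (hv r hr).continuousAt.continuousWithinAt
  have hvc' := hvc.mono hsub
  have hc' := hc.mono hsub
  have hd : ∀ r ∈ uIcc R (2 * R), HasDerivAt (fun r => (2 * R - r) * (r ^ m * v r ^ 2))
      (-1 * (r ^ m * v r ^ 2) + (2 * R - r) * ((m * r ^ (m - 1)) * v r ^ 2
        + r ^ m * (2 * v r * v' r))) r := by
    intro r hr
    have h1 := ((hasDerivAt_id r).const_sub (2 * R)).mul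
      ((hasDerivAt_pow m r).mul ((hv r (hsub hr)).pow 2))
    convert! h1 using 1
    simp [mul_assoc]
  have hi : IntervalIntegrable (fun r => -1 * (r ^ m * v r ^ 2) + (2 * R - r) *
      ((m * r ^ (m - 1)) * v r ^ 2 + r ^ m * (2 * v r * v' r))) volume R (2 * R) :=
    ContinuousOn.intervalIntegrable (by fun_prop)
  have key := intervalIntegral.integral_eq_sub_of_hasDerivAt hd hi
  have hmono := intervalIntegral.integral_mono_on (a := R) (b := 2 * R) (by linarith)
    hi.neg (g := fun r => 2 * (r ^ (m + 2) * v' r ^ 2 + r ^ m * v r ^ 2))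
    (ContinuousOn.intervalIntegrable (by fun_prop)) (by
      intro r hr
      have hr0 : 0 < r := lt_of_lt_of_le hR hr.1
      have h2 : 0 ≤ 2 * R - r := by linarith [hr.2]
      have h3 : 2 * R - r ≤ r := by linarith [hr.1]
      have hrm : 0 < r ^ m := by positivity
      have e1 : 0 ≤ (2 * R - r) * ((m * r ^ (m - 1)) * v r ^ 2) := by positivity
      have e2 : (2 * R - r) * -(2 * v r * v' r) ≤ v r ^ 2 + r ^ 2 * v' r ^ 2 := by
        calc (2 * R - r) * -(2 * v r * v' r) ≤ (2 * R - r) * (2 * |v r * v' r|) := by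
              apply mul_le_mul_of_nonneg_left _ h2
              have := neg_abs_le (v r * v' r); linarith
          _ ≤ r * (2 * |v r * v' r|) := mul_le_mul_of_nonneg_right h3 (by positivity)
          _ ≤ _ := by
              rw [abs_mul, ← sq_abs (v r), ← sq_abs (v' r)]
              nlinarith [sq_nonneg (|v r| - r * |v' r|)]
      have e3 := mul_le_mul_of_nonneg_left e2 hrm.le
      have e4 : 0 ≤ r ^ m * (r ^ 2 * v' r ^ 2) := by positivity
      simp only [Pi.neg_apply]
      have : r ^ (m + 2) = r ^ m * r ^ 2 := pow_add _ _ _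
      rw [this]
      nlinarith)
  rw [intervalIntegral.integral_const_mul] at hmono
  have hneg : ∫ r in R..2 * R, (-fun r => -1 * (r ^ m * v r ^ 2) + (2 * R - r) *
      ((m * r ^ (m - 1)) * v r ^ 2 + r ^ m * (2 * v r * v' r))) r = R ^ (m + 1) * v R ^ 2 := by
    simp only [Pi.neg_apply]
    rw [intervalIntegral.integral_neg, key]
    ring
  rw [hneg] at hmono
  exact hmono

lemma hardy_interval (m : ℕ) (v v' : ℝ → ℝ) (hv : ∀ r, 0 < r → HasDerivAt v (v' r) r)
    (hc : ContinuousOn v' (Ioi 0)) {s R : ℝ} (hs : 0 < s) (hsR : s ≤ R) :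
    ((m + 1) / 2 : ℝ) ^ 2 * (∫ r in s..R, r ^ m * v r ^ 2)
      - (m + 1) / 2 * (R ^ (m + 1) * v R ^ 2) ≤ ∫ r in s..R, r ^ (m + 2) * v' r ^ 2 := by
  have hsub : uIcc s R ⊆ Ioi 0 := by
    rw [uIcc_of_le hsR]
    exact fun x hx => lt_of_lt_of_le hs hx.1
  have hvc : ContinuousOn v (Ioi 0) := fun r hr => (hv r hr).continuousAt.continuousWithinAt
  have hvc' := hvc.mono hsub
  have hc' := hc.mono hsub
  have hd : ∀ r ∈ uIcc s R, HasDerivAt (fun r => (r ^ (m + 1) * v r ^ 2))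
      ((m + 1) * r ^ m * v r ^ 2 + r ^ (m + 1) * (2 * v r * v' r)) r := by
    intro r hr
    have h1 := (hasDerivAt_pow (m + 1) r).mul ((hv r (hsub hr)).pow 2)
    convert! h1 using 1
    simp [mul_assoc]
  have hi : IntervalIntegrable (fun r => ((m : ℝ) + 1) * r ^ m * v r ^ 2
      + r ^ (m + 1) * (2 * v r * v' r)) volume s R :=
    ContinuousOn.intervalIntegrable (by fun_prop)
  have key := intervalIntegral.integral_eq_sub_of_hasDerivAt hd hi
  have hiA : IntervalIntegrable (fun r => r ^ (m + 2) * v' r ^ 2) volume s R :=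
    ContinuousOn.intervalIntegrable (by fun_prop)
  have hiB : IntervalIntegrable (fun r => r ^ m * v r ^ 2) volume s R :=
    ContinuousOn.intervalIntegrable (by fun_prop)
  have hnn : 0 ≤ ∫ r in s..R, ((r ^ (m + 2) * v' r ^ 2
      - ((m + 1) / 2 : ℝ) ^ 2 * (r ^ m * v r ^ 2)) + ((m + 1) / 2 : ℝ) *
      (((m : ℝ) + 1) * r ^ m * v r ^ 2 + r ^ (m + 1) * (2 * v r * v' r))) := by
    apply intervalIntegral.integral_nonneg hsR
    intro r hr
    have hr0 : 0 < r := lt_of_lt_of_le hs hr.1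
    have : (r ^ (m + 2) * v' r ^ 2
      - ((m + 1) / 2 : ℝ) ^ 2 * (r ^ m * v r ^ 2)) + ((m + 1) / 2 : ℝ) *
      (((m : ℝ) + 1) * r ^ m * v r ^ 2 + r ^ (m + 1) * (2 * v r * v' r))
      = r ^ m * (r * v' r + (m + 1) / 2 * v r) ^ 2 := by ring
    rw [this]; positivity
  rw [intervalIntegral.integral_add (hiA.sub (hiB.const_mul _)) (hi.const_mul _),
    intervalIntegral.integral_sub hiA (hiB.const_mul _), intervalIntegral.integral_const_mul,
    intervalIntegral.integral_const_mul, key] at hnn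
  have : 0 ≤ ((m : ℝ) + 1) / 2 * (s ^ (m + 1) * v s ^ 2) := by positivity
  linarith

lemma tendsto_integral_exhaust {g : ℝ → ℝ} {b : ℝ} (hg : IntegrableOn g (Ioi b)) :
    Tendsto (fun x : ℝ => ∫ r in (b + x⁻¹)..(b + x), g r) atTop (𝓝 (∫ r in Ioi b, g r)) := by
  have hcont : Tendsto (fun x : ℝ => ∫ r in b..(b + x⁻¹), g r) atTop (𝓝 0) := by
    have h1 : Tendsto (fun x : ℝ => b + x⁻¹) atTop (𝓝[Icc b (b + 1)] b) := by
      apply tendsto_nhdsWithin_iff.2 ⟨?_, ?_⟩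
      · simpa using (tendsto_inv_atTop_zero (𝕜 := ℝ)).const_add b
      · filter_upwards [eventually_ge_atTop 1] with x hx
        have := inv_le_one_of_one_le₀ hx
        have : 0 ≤ x⁻¹ := by positivity
        constructor <;> linarith
    have h_int : IntegrableOn g (Icc b (b + 1)) := by
      rw [integrableOn_Icc_iff_integrableOn_Ioc]
      exact hg.mono_set Ioc_subset_Ioi_self
    have h2 := intervalIntegral.continuousOn_primitive_interval (by
      rwa [uIcc_of_le (by linarith : b ≤ b + 1)])
    rw [uIcc_of_le (by linarith : b ≤ b + 1)] at h2
    have h3 := (h2 b (by simp)).tendsto.comp h1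
    simpa [Function.comp_def] using h3
  have hmain := intervalIntegral_tendsto_integral_Ioi b hg
    (tendsto_atTop_add_const_left atTop b tendsto_id)
  have := hmain.sub hcont
  rw [sub_zero] at this
  refine this.congr' ?_
  filter_upwards [eventually_gt_atTop 0] with x hx
  have hxi : 0 < x⁻¹ := by positivity
  apply intervalIntegral.integral_interval_sub_left
  · rw [intervalIntegrable_iff_integrableOn_Ioc_of_le (by simp; linarith)]
    exact hg.mono_set Ioc_subset_Ioi_self
  · rw [intervalIntegrable_iff_integrableOn_Ioc_of_le (by linarith)]
    exact hg.mono_set Ioc_subset_Ioi_self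

lemma hardy_Ioi (m : ℕ) (v v' : ℝ → ℝ) (hv : ∀ r, 0 < r → HasDerivAt v (v' r) r)
    (hc : ContinuousOn v' (Ioi 0)) (hA : IntegrableOn (fun r => r ^ (m + 2) * v' r ^ 2) (Ioi 0))
    (hB : IntegrableOn (fun r => r ^ m * v r ^ 2) (Ioi 0)) :
    ((m + 1) / 2 : ℝ) ^ 2 * (∫ r in Ioi 0, r ^ m * v r ^ 2)
      ≤ ∫ r in Ioi 0, r ^ (m + 2) * v' r ^ 2 := by
  have hAB : IntegrableOn (fun r => r ^ (m + 2) * v' r ^ 2 + r ^ m * v r ^ 2) (Ioi 0) := hA.add hB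
  have h0 : Tendsto (fun R : ℝ => R ^ (m + 1) * v R ^ 2) atTop (𝓝 0) := by
    have l1 := intervalIntegral_tendsto_integral_Ioi 0 hAB tendsto_id
    have l2 := intervalIntegral_tendsto_integral_Ioi 0 hAB
      (tendsto_id.const_mul_atTop (zero_lt_two (α := ℝ)))
    have l3 := (l2.sub l1).const_mul 2
    rw [sub_self, mul_zero] at l3
    refine tendsto_of_tendsto_of_tendsto_of_le_of_le' tendsto_const_nhds l3 ?_ ?_
    · filter_upwards [eventually_gt_atTop 0] with R hR using by positivity
    · filter_upwards [eventually_gt_atTop 0] with R hR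
      refine (weighted_sq_le m v v' hv hc hR).trans_eq ?_
      congr 1
      symm
      apply intervalIntegral.integral_interval_sub_left
      · rw [intervalIntegrable_iff_integrableOn_Ioc_of_le (by simp; linarith)]
        exact hAB.mono_set Ioc_subset_Ioi_self
      · rw [intervalIntegrable_iff_integrableOn_Ioc_of_le (by simp; linarith)]
        exact hAB.mono_set Ioc_subset_Ioi_self
  have lA := tendsto_integral_exhaust hA
  have lB := tendsto_integral_exhaust hB
  have h0' : Tendsto (fun R : ℝ => (0 + R) ^ (m + 1) * v (0 + R) ^ 2) atTop (𝓝 0) := by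
    simpa using h0
  have l := (lB.const_mul (((m + 1) / 2 : ℝ) ^ 2)).sub (h0'.const_mul (((m : ℝ) + 1) / 2))
  rw [mul_zero, sub_zero] at l
  refine le_of_tendsto_of_tendsto l lA ?_
  filter_upwards [eventually_ge_atTop 1] with x hx
  apply hardy_interval m v v' hv hc
  · positivity
  · have := inv_le_one_of_one_le₀ hx
    linarith

/-! ### The radial equation and its energy potential -/

/-- The partial derivative `∂ᵣF` of a function of `(r, t)`. -/
def Dr (F : ℝ × ℝ → ℝ) (q : ℝ × ℝ) : ℝ := fderiv ℝ F q (1, 0)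

/-- The partial derivative `∂ₜF` of a function of `(r, t)`. -/
def Dt (F : ℝ × ℝ → ℝ) (q : ℝ × ℝ) : ℝ := fderiv ℝ F q (0, 1)

/-- The open half plane `{(r, t) : r > 0}`. -/
def HP : Set (ℝ × ℝ) := {q | 0 < q.1}

/-- `W` is a classical solution on `r > 0` of the radial form of the equation in dimension
`m + 3`. -/
structure RadSol (m : ℕ) (a p : ℝ) (W : ℝ × ℝ → ℝ) : Prop where
  smooth : ContDiffOn ℝ 2 W HP
  pde : ∀ q ∈ HP, Dt (Dt W) q - (Dr (Dr W) q + (m + 2) / q.1 * Dr W q) + a * W q / q.1 ^ 2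
    = -(|W q| ^ (p - 1) * W q)

/-- The radial energy density, weighted by `r ^ (d - 1)` with `d = m + 3`. -/
def eDens (m : ℕ) (a p : ℝ) (W : ℝ × ℝ → ℝ) (q : ℝ × ℝ) : ℝ :=
  q.1 ^ (m + 2) * (1 / 2 * Dr W q ^ 2 + 1 / 2 * Dt W q ^ 2 + a / 2 * W q ^ 2 / q.1 ^ 2
    + 1 / (p + 1) * |W q| ^ (p + 1))

/-- The radial momentum density, weighted by `r ^ (d - 1)` with `d = m + 3`. -/
def mDens (m : ℕ) (W : ℝ × ℝ → ℝ) (q : ℝ × ℝ) : ℝ :=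
  q.1 ^ (m + 2) * (Dr W q * Dt W q)

lemma isOpen_HP : IsOpen HP := isOpen_lt continuous_const continuous_fst

lemma convex_HP : Convex ℝ HP :=
  (convex_Ioi (0 : ℝ)).linear_preimage (LinearMap.fst ℝ ℝ ℝ)

lemma DifferentiableAt.hasDerivAt_Dr {F : ℝ × ℝ → ℝ} {r t : ℝ} (h : DifferentiableAt ℝ F (r, t)) :
    HasDerivAt (fun ρ => F (ρ, t)) (Dr F (r, t)) r :=
  HasFDerivAt.comp_hasDerivAt r h.hasFDerivAt ((hasDerivAt_id r).prodMk (hasDerivAt_const r t))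

lemma DifferentiableAt.hasDerivAt_Dt {F : ℝ × ℝ → ℝ} {r t : ℝ} (h : DifferentiableAt ℝ F (r, t)) :
    HasDerivAt (fun τ => F (r, τ)) (Dt F (r, t)) t :=
  HasFDerivAt.comp_hasDerivAt t h.hasFDerivAt ((hasDerivAt_const t r).prodMk (hasDerivAt_id t))

lemma fderiv_apply_pair (F : ℝ × ℝ → ℝ) (q x : ℝ × ℝ) :
    fderiv ℝ F q x = x.1 * Dr F q + x.2 * Dt F q := by
  have : x = x.1 • ((1, 0) : ℝ × ℝ) + x.2 • ((0, 1) : ℝ × ℝ) := by ext <;> simp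
  conv_lhs => rw [this, map_add, map_smul, map_smul]
  rfl

namespace RadSol
variable {m : ℕ} {a p : ℝ} {W : ℝ × ℝ → ℝ}

lemma contDiffAt (h : RadSol m a p W) {q : ℝ × ℝ} (hq : q ∈ HP) : ContDiffAt ℝ 2 W q :=
  h.smooth.contDiffAt (isOpen_HP.mem_nhds hq)

lemma diff (h : RadSol m a p W) {q : ℝ × ℝ} (hq : q ∈ HP) : DifferentiableAt ℝ W q :=
  (h.contDiffAt hq).differentiableAt (by norm_num)

lemma diff_fderiv (h : RadSol m a p W) {q : ℝ × ℝ} (hq : q ∈ HP) :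
    DifferentiableAt ℝ (fderiv ℝ W) q :=
  ((h.smooth.fderiv_of_isOpen isOpen_HP (m := 1) (by norm_num)).differentiableOn
    (by norm_num)).differentiableAt (isOpen_HP.mem_nhds hq)

lemma diff_Dr (h : RadSol m a p W) {q : ℝ × ℝ} (hq : q ∈ HP) : DifferentiableAt ℝ (Dr W) q :=
  (h.diff_fderiv hq).clm_apply (differentiableAt_const _)

lemma diff_Dt (h : RadSol m a p W) {q : ℝ × ℝ} (hq : q ∈ HP) : DifferentiableAt ℝ (Dt W) q :=
  (h.diff_fderiv hq).clm_apply (differentiableAt_const _)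

lemma cont (h : RadSol m a p W) : ContinuousOn W HP :=
  fun _ hq => (h.diff hq).continuousAt.continuousWithinAt

lemma cont_Dr (h : RadSol m a p W) : ContinuousOn (Dr W) HP :=
  fun _ hq => (h.diff_Dr hq).continuousAt.continuousWithinAt

lemma cont_Dt (h : RadSol m a p W) : ContinuousOn (Dt W) HP :=
  fun _ hq => (h.diff_Dt hq).continuousAt.continuousWithinAt

lemma symm (h : RadSol m a p W) {q : ℝ × ℝ} (hq : q ∈ HP) : Dt (Dr W) q = Dr (Dt W) q := by
  have hs := (h.contDiffAt hq).isSymmSndFDerivAt (by simp)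
  have e1 : Dt (Dr W) q = fderiv ℝ (fderiv ℝ W) q (0, 1) (1, 0) := by
    have := (h.diff_fderiv hq).hasFDerivAt.clm_apply (hasFDerivAt_const ((1, 0) : ℝ × ℝ) q)
    change fderiv ℝ (fun y => fderiv ℝ W y (1, 0)) q (0, 1) = _
    rw [this.fderiv]; simp
  have e2 : Dr (Dt W) q = fderiv ℝ (fderiv ℝ W) q (1, 0) (0, 1) := by
    have := (h.diff_fderiv hq).hasFDerivAt.clm_apply (hasFDerivAt_const ((0, 1) : ℝ × ℝ) q)
    change fderiv ℝ (fun y => fderiv ℝ W y (0, 1)) q (1, 0) = _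
    rw [this.fderiv]; simp
  rw [e1, e2]
  exact hs _ _

lemma diff_eDens (h : RadSol m a p W) (hp : 1 < p) {q : ℝ × ℝ} (hq : q ∈ HP) :
    DifferentiableAt ℝ (eDens m a p W) q := by
  have h1 := h.diff hq
  have h2 := h.diff_Dr hq
  have h3 := h.diff_Dt hq
  have h4 : DifferentiableAt ℝ (fun q => |W q| ^ (p + 1)) q :=
    (hasDerivAt_abs_rpow (W q) (by linarith : 1 < p + 1)).differentiableAt.comp q h1
  have h5 : q.1 ^ 2 ≠ 0 := (pow_pos hq 2).ne'
  unfold eDens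
  fun_prop (disch := assumption)

lemma diff_mDens (h : RadSol m a p W) {q : ℝ × ℝ} (hq : q ∈ HP) :
    DifferentiableAt ℝ (mDens m W) q := by
  have h2 := h.diff_Dr hq
  have h3 := h.diff_Dt hq
  unfold mDens
  fun_prop

/-- Local conservation of energy: `∂ₜ` of the energy density is `∂ᵣ` of the momentum density. -/
lemma conservation (h : RadSol m a p W) (hp : 1 < p) {q : ℝ × ℝ} (hq : q ∈ HP) :
    Dt (eDens m a p W) q = Dr (mDens m W) q := by
  obtain ⟨r, t⟩ := q
  have hr : 0 < r := hq
  have hP : HasDerivAt (fun τ => eDens m a p W (r, τ)) (r ^ (m + 2) *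
      (Dr W (r, t) * Dt (Dr W) (r, t) + Dt W (r, t) * Dt (Dt W) (r, t)
        + a * W (r, t) * Dt W (r, t) / r ^ 2
        + |W (r, t)| ^ (p - 1) * W (r, t) * Dt W (r, t))) t := by
    have k0 := (h.diff hq).hasDerivAt_Dt
    have k1 := (h.diff_Dr hq).hasDerivAt_Dt
    have k2 := (h.diff_Dt hq).hasDerivAt_Dt
    have k3 := (hasDerivAt_abs_rpow (W (r, t)) (by linarith : 1 < p + 1)).comp t k0
    have k := ((((((k1.pow 2).const_mul (1 / 2 : ℝ)).add ((k2.pow 2).const_mul (1 / 2 : ℝ))).add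
      (((k0.pow 2).const_mul (a / 2)).div_const (r ^ 2))).add
      (k3.const_mul (1 / (p + 1)))).const_mul (r ^ (m + 2)))
    convert! k using 1
    have hp1 : p + 1 ≠ 0 := by linarith
    rw [show p + 1 - 2 = p - 1 by ring]
    field_simp
    ring
  have hQ : HasDerivAt (fun ρ => mDens m W (ρ, t)) ((m + 2) * r ^ (m + 1) *
      (Dr W (r, t) * Dt W (r, t)) + r ^ (m + 2) *
      (Dr (Dr W) (r, t) * Dt W (r, t) + Dr W (r, t) * Dr (Dt W) (r, t))) r := by
    have k1 := (h.diff_Dr hq).hasDerivAt_Dr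
    have k2 := (h.diff_Dt hq).hasDerivAt_Dr
    have k := (hasDerivAt_pow (m + 2) r).mul (k1.mul k2)
    convert! k using 1
    simp
  rw [(h.diff_eDens hp hq).hasDerivAt_Dt.unique hP, (h.diff_mDens hq).hasDerivAt_Dr.unique hQ,
    h.symm hq]
  have := h.pde _ hq
  simp only at this
  have e : Dt (Dt W) (r, t) = (Dr (Dr W) (r, t) + (m + 2) / r * Dr W (r, t))
    - a * W (r, t) / r ^ 2 -(|W (r, t)| ^ (p - 1) * W (r, t)) := by linarith
  rw [e]
  field_simp
  ring

/-- The closed form `eDens dr + mDens dt` has a primitive on the half plane. -/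
lemma exists_potential (h : RadSol m a p W) (hp : 1 < p) :
    ∃ Φ : ℝ × ℝ → ℝ, ∀ q ∈ HP, HasFDerivAt Φ (eDens m a p W q • ContinuousLinearMap.fst ℝ ℝ ℝ
      + mDens m W q • ContinuousLinearMap.snd ℝ ℝ ℝ) q := by
  obtain ⟨Φ, hΦ⟩ := convex_HP.exists_forall_hasFDerivWithinAt_of_hasFDerivWithinAt_symmetric
    (𝕜 := ℝ) (ω := fun q => eDens m a p W q • ContinuousLinearMap.fst ℝ ℝ ℝ
      + mDens m W q • ContinuousLinearMap.snd ℝ ℝ ℝ)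
    (fun q hq => (((h.diff_eDens hp hq).hasFDerivAt.smul_const _).add
      ((h.diff_mDens hq).hasFDerivAt.smul_const _)).hasFDerivWithinAt) (by
      intro q hq x _ y _
      simp only [add_apply, ContinuousLinearMap.smulRight_apply,
        smul_apply, ContinuousLinearMap.coe_fst', ContinuousLinearMap.coe_snd',
        smul_eq_mul, fderiv_apply_pair, h.conservation hp hq]
      ring)
  exact ⟨Φ, fun q hq => (hΦ q hq).hasFDerivAt (isOpen_HP.mem_nhds hq)⟩

end RadSol

/-! ### Consequences of the energy bound at a fixed time -/

/-- The sum of the four nonnegative quantities controlled by the energy, weighted by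
`r ^ (d - 1)` with `d = m + 3`. -/
def nDens (m : ℕ) (p : ℝ) (W : ℝ × ℝ → ℝ) (q : ℝ × ℝ) : ℝ :=
  q.1 ^ (m + 2) * Dr W q ^ 2 + q.1 ^ m * W q ^ 2 + q.1 ^ (m + 2) * Dt W q ^ 2
    + q.1 ^ (m + 2) * |W q| ^ (p + 1)

lemma eDens_eq (m : ℕ) (a p : ℝ) (W : ℝ × ℝ → ℝ) {q : ℝ × ℝ} (hq : q ∈ HP) :
    eDens m a p W q = 1 / 2 * (q.1 ^ (m + 2) * Dr W q ^ 2) + a / 2 * (q.1 ^ m * W q ^ 2)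
      + 1 / 2 * (q.1 ^ (m + 2) * Dt W q ^ 2) + 1 / (p + 1) * (q.1 ^ (m + 2) * |W q| ^ (p + 1)) := by
  have h : q.1 ≠ 0 := ne_of_gt hq
  unfold eDens
  rw [pow_add]
  field_simp
  ring

lemma abs_eDens_le (m : ℕ) {a p : ℝ} (hp : 1 < p) (W : ℝ × ℝ → ℝ) {q : ℝ × ℝ} (hq : q ∈ HP) :
    |eDens m a p W q| ≤ (1 + |a|) * nDens m p W q := by
  have h : 0 < q.1 := hq
  have A : 0 ≤ q.1 ^ (m + 2) * Dr W q ^ 2 := by positivity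
  have B : 0 ≤ q.1 ^ m * W q ^ 2 := by positivity
  have C : 0 ≤ q.1 ^ (m + 2) * Dt W q ^ 2 := by positivity
  have D : 0 ≤ q.1 ^ (m + 2) * |W q| ^ (p + 1) := by positivity
  have hp0 : 0 < 1 / (p + 1) := by apply one_div_pos.2; linarith
  have hp1 : 1 / (p + 1) ≤ 1 := by rw [div_le_one] <;> linarith
  have D' : 1 / (p + 1) * (q.1 ^ (m + 2) * |W q| ^ (p + 1)) ≤ q.1 ^ (m + 2) * |W q| ^ (p + 1) :=
    mul_le_of_le_one_left D hp1
  have D'' := mul_nonneg hp0.le D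
  have B1 := mul_le_mul_of_nonneg_right (le_abs_self a) B
  have B2 := mul_le_mul_of_nonneg_right (neg_abs_le a) B
  have aA := mul_nonneg (abs_nonneg a) A
  have aB := mul_nonneg (abs_nonneg a) B
  have aC := mul_nonneg (abs_nonneg a) C
  have aD := mul_nonneg (abs_nonneg a) D
  rw [eDens_eq m a p W hq, nDens, abs_le]
  constructor <;> nlinarith

lemma nDens_nonneg (m : ℕ) (p : ℝ) (W : ℝ × ℝ → ℝ) {q : ℝ × ℝ} (hq : q ∈ HP) :
    0 ≤ nDens m p W q := by
  have h : 0 < q.1 := hq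
  unfold nDens
  positivity

lemma contOn_weight (n : ℕ) {f : ℝ → ℝ} {s : Set ℝ} (hf : ContinuousOn f s) :
    ContinuousOn (fun r => r ^ n * f r ^ 2) s := by
  fun_prop

lemma contOn_abs_rpow {X : Type*} [TopologicalSpace X] {f : X → ℝ} {s : Set X} {p : ℝ}
    (hp : 1 < p) (hf : ContinuousOn f s) : ContinuousOn (fun x => |f x| ^ (p + 1)) s :=
  hf.abs.rpow_const fun _ _ => Or.inr (by linarith)

namespace RadSol
variable {m : ℕ} {a p : ℝ} {W : ℝ × ℝ → ℝ}

lemma cont_eDens (h : RadSol m a p W) (hp : 1 < p) : ContinuousOn (eDens m a p W) HP :=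
  fun _ hq => (h.diff_eDens hp hq).continuousAt.continuousWithinAt

lemma cont_mDens (h : RadSol m a p W) : ContinuousOn (mDens m W) HP :=
  fun _ hq => (h.diff_mDens hq).continuousAt.continuousWithinAt

/-- The energy controls the full norm, by Hardy's inequality. -/
lemma coercive (h : RadSol m a p W) (hp : 1 < p) {c : ℝ} (hc1 : c ≤ 1 / 2)
    (hc2 : c * (1 + ((m + 1) / 2 : ℝ) ^ 2) ≤ (((m + 1) / 2 : ℝ) ^ 2 + a) / 2)
    (hc3 : c ≤ 1 / (p + 1)) {t : ℝ}
    (hfin : IntegrableOn (fun r => nDens m p W (r, t)) (Ioi 0)) :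
    c * (∫ r in Ioi 0, nDens m p W (r, t)) ≤ ∫ r in Ioi 0, eDens m a p W (r, t) := by
  have hmaps : MapsTo (fun r : ℝ => (r, t)) (Ioi 0) HP := fun r hr => hr
  have hline : ContinuousOn (fun r : ℝ => (r, t)) (Ioi 0) := by fun_prop
  have cW := h.cont.comp hline hmaps
  have cDr := h.cont_Dr.comp hline hmaps
  have cE := (h.cont_eDens hp).comp hline hmaps
  simp only [Function.comp_def] at cW cDr cE
  have iA : IntegrableOn (fun r => r ^ (m + 2) * Dr W (r, t) ^ 2) (Ioi 0) := by
    refine Integrable.mono' hfin (ContinuousOn.aestronglyMeasurable (by fun_prop)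
      measurableSet_Ioi) ((ae_restrict_iff' measurableSet_Ioi).2 (.of_forall fun r hr => ?_))
    have hr0 : 0 < r := hr
    rw [Real.norm_of_nonneg (by positivity), nDens]
    have : 0 ≤ r ^ m * W (r, t) ^ 2 := by positivity
    have : 0 ≤ r ^ (m + 2) * Dt W (r, t) ^ 2 := by positivity
    have : 0 ≤ r ^ (m + 2) * |W (r, t)| ^ (p + 1) := by positivity
    linarith
  have iB : IntegrableOn (fun r => r ^ m * W (r, t) ^ 2) (Ioi 0) := by
    refine Integrable.mono' hfin ((contOn_weight m cW).aestronglyMeasurable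
      measurableSet_Ioi) ((ae_restrict_iff' measurableSet_Ioi).2 (.of_forall fun r hr => ?_))
    have hr0 : 0 < r := hr
    rw [Real.norm_of_nonneg (by positivity), nDens]
    have : 0 ≤ r ^ (m + 2) * Dr W (r, t) ^ 2 := by positivity
    have : 0 ≤ r ^ (m + 2) * Dt W (r, t) ^ 2 := by positivity
    have : 0 ≤ r ^ (m + 2) * |W (r, t)| ^ (p + 1) := by positivity
    linarith
  have iE : IntegrableOn (fun r => eDens m a p W (r, t)) (Ioi 0) := by
    refine Integrable.mono' (hfin.const_mul (1 + |a|)) (cE.aestronglyMeasurable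
      measurableSet_Ioi) ((ae_restrict_iff' measurableSet_Ioi).2 (.of_forall fun r hr => ?_))
    exact abs_eDens_le m hp W (q := (r, t)) hr
  have hardy := hardy_Ioi m (fun r => W (r, t)) (fun r => Dr W (r, t))
    (fun r hr => (h.diff (q := (r, t)) hr).hasDerivAt_Dr) cDr iA iB
  have hB0 : 0 ≤ ∫ r in Ioi 0, r ^ m * W (r, t) ^ 2 :=
    setIntegral_nonneg measurableSet_Ioi fun r hr => by
      have hr0 : 0 < r := hr
      positivity
  have hmono : ∫ r in Ioi 0, ((1 / 2 - c) * (r ^ (m + 2) * Dr W (r, t) ^ 2)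
      + (a / 2 - c) * (r ^ m * W (r, t) ^ 2)) ≤
      ∫ r in Ioi 0, (eDens m a p W (r, t) - c * nDens m p W (r, t)) := by
    refine setIntegral_mono_on ((iA.const_mul _).add (iB.const_mul _)) (iE.sub (hfin.const_mul c))
      measurableSet_Ioi fun r hr => ?_
    have hr0 : 0 < r := hr
    rw [eDens_eq m a p W (q := (r, t)) hr, nDens]
    have k1 := mul_le_mul_of_nonneg_right hc1 (by positivity : 0 ≤ r ^ (m + 2) * Dt W (r, t) ^ 2)
    have k2 := mul_le_mul_of_nonneg_right hc3
      (by positivity : 0 ≤ r ^ (m + 2) * |W (r, t)| ^ (p + 1))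
    simp only
    linarith
  rw [integral_add (iA.const_mul _) (iB.const_mul _), integral_sub iE (hfin.const_mul c),
    integral_const_mul, integral_const_mul, integral_const_mul] at hmono
  have := mul_le_mul_of_nonneg_left hardy (by linarith : 0 ≤ 1 / 2 - c)
  have := mul_le_mul_of_nonneg_right hc2 hB0
  nlinarith

/-- Pointwise decay from the bound on the full norm. -/
lemma pointwise (h : RadSol m a p W) {K t : ℝ}
    (hfin : IntegrableOn (fun r => nDens m p W (r, t)) (Ioi 0))
    (hK : ∫ r in Ioi 0, nDens m p W (r, t) ≤ K) {R : ℝ} (hR : 0 < R) :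
    R ^ (m + 1) * W (R, t) ^ 2 ≤ 2 * K := by
  have hmaps : MapsTo (fun r : ℝ => (r, t)) (Ioi 0) HP := fun r hr => hr
  have hline : ContinuousOn (fun r : ℝ => (r, t)) (Ioi 0) := by fun_prop
  have cW := h.cont.comp hline hmaps
  have cDr := h.cont_Dr.comp hline hmaps
  simp only [Function.comp_def] at cW cDr
  have hw := weighted_sq_le m (fun r => W (r, t)) (fun r => Dr W (r, t))
    (fun r hr => (h.diff (q := (r, t)) hr).hasDerivAt_Dr) cDr hR
  refine hw.trans ?_
  have hsub : uIcc R (2 * R) ⊆ Ioi 0 := by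
    rw [uIcc_of_le (by linarith)]
    exact fun x hx => lt_of_lt_of_le hR hx.1
  have cW' := cW.mono hsub
  have cDr' := cDr.mono hsub
  have hsub' : Ioc R (2 * R) ⊆ Ioi 0 := fun x hx => hR.trans hx.1
  have h1 : ∫ r in R..2 * R, (r ^ (m + 2) * Dr W (r, t) ^ 2 + r ^ m * W (r, t) ^ 2)
      ≤ ∫ r in R..2 * R, nDens m p W (r, t) := by
    apply intervalIntegral.integral_mono_on (by linarith)
    · exact ((contOn_weight (m + 2) cDr').add (contOn_weight m cW')).intervalIntegrable
    · rw [intervalIntegrable_iff_integrableOn_Ioc_of_le (by linarith)]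
      exact hfin.mono_set hsub'
    · intro r hr
      have hr0 : 0 < r := lt_of_lt_of_le hR hr.1
      rw [nDens]
      have : 0 ≤ r ^ (m + 2) * Dt W (r, t) ^ 2 := by positivity
      have : 0 ≤ r ^ (m + 2) * |W (r, t)| ^ (p + 1) := by positivity
      simp only
      linarith
  have h2 : ∫ r in R..2 * R, nDens m p W (r, t) ≤ ∫ r in Ioi 0, nDens m p W (r, t) := by
    rw [intervalIntegral.integral_of_le (by linarith)]
    exact setIntegral_mono_set hfin ((ae_restrict_iff' measurableSet_Ioi).2
      (.of_forall fun r hr => nDens_nonneg m p W (q := (r, t)) hr)) hsub'.eventuallyLE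
  linarith

/-- The increment of a potential along a horizontal segment is an energy in an annulus, hence
controlled by the full norm. -/
lemma horizontal (h : RadSol m a p W) (hp : 1 < p) {K t : ℝ} {Φ : ℝ × ℝ → ℝ}
    (hΦ : ∀ q ∈ HP, HasFDerivAt Φ (eDens m a p W q • ContinuousLinearMap.fst ℝ ℝ ℝ
      + mDens m W q • ContinuousLinearMap.snd ℝ ℝ ℝ) q)
    (hfin : IntegrableOn (fun r => nDens m p W (r, t)) (Ioi 0))
    (hK : ∫ r in Ioi 0, nDens m p W (r, t) ≤ K) {s R : ℝ} (hs : 0 < s) (hsR : s ≤ R) :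
    |Φ (R, t) - Φ (s, t)| ≤ (1 + |a|) * K := by
  have hsub : uIcc s R ⊆ Ioi 0 := by
    rw [uIcc_of_le hsR]
    exact fun x hx => lt_of_lt_of_le hs hx.1
  have cE := (h.cont_eDens hp).comp (f := fun r : ℝ => (r, t)) (s := uIcc s R) (by fun_prop)
    (fun r hr => hsub hr)
  simp only [Function.comp_def] at cE
  have hd : ∀ r ∈ uIcc s R, HasDerivAt (fun r => Φ (r, t)) (eDens m a p W (r, t)) r := by
    intro r hr
    have := (hΦ (r, t) (hsub hr)).comp_hasDerivAt r
      ((hasDerivAt_id r).prodMk (hasDerivAt_const r t))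
    simpa [Function.comp_def] using this
  rw [← intervalIntegral.integral_eq_sub_of_hasDerivAt hd cE.intervalIntegrable]
  have hsub' : Ioc s R ⊆ Ioi 0 := fun x hx => hs.trans hx.1
  refine (intervalIntegral.abs_integral_le_integral_abs hsR).trans ?_
  have h1 : ∫ r in s..R, |eDens m a p W (r, t)| ≤ ∫ r in s..R, (1 + |a|) * nDens m p W (r, t) := by
    apply intervalIntegral.integral_mono_on hsR cE.abs.intervalIntegrable
    · rw [intervalIntegrable_iff_integrableOn_Ioc_of_le hsR]
      exact (hfin.mono_set hsub').const_mul _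
    · intro r hr
      exact abs_eDens_le m hp W (q := (r, t)) (lt_of_lt_of_le hs hr.1)
  rw [intervalIntegral.integral_const_mul] at h1
  have h2 : ∫ r in s..R, nDens m p W (r, t) ≤ ∫ r in Ioi 0, nDens m p W (r, t) := by
    rw [intervalIntegral.integral_of_le hsR]
    exact setIntegral_mono_set hfin ((ae_restrict_iff' measurableSet_Ioi).2
      (.of_forall fun r hr => nDens_nonneg m p W (q := (r, t)) hr)) hsub'.eventuallyLE
  exact h1.trans (mul_le_mul_of_nonneg_left (h2.trans hK) (by positivity))

end RadSol

/-! ### The flux through a truncated cone -/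

namespace RadSol
variable {m : ℕ} {a p : ℝ} {W : ℝ × ℝ → ℝ}

/-- Along an incoming light ray, read backwards in time from radius `ρ` to radius at most `2ρ`, the
potential drops by at most `|a| K`: its increment is a flux whose only possibly negative part, the
term with `a`, is at most `|a| K / ρ` by the pointwise decay of `W`. -/
lemma incoming (h : RadSol m a p W) (hp : 1 < p) {K : ℝ} {Φ : ℝ × ℝ → ℝ}
    (hΦ : ∀ q ∈ HP, HasFDerivAt Φ (eDens m a p W q • ContinuousLinearMap.fst ℝ ℝ ℝ
      + mDens m W q • ContinuousLinearMap.snd ℝ ℝ ℝ) q) (hK0 : 0 ≤ K)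
    (hpt : ∀ r t, 0 < r → r ^ (m + 1) * W (r, t) ^ 2 ≤ 2 * K) {ρ l T : ℝ} (hρ : 0 < ρ)
    (hl : 0 ≤ l) (hlρ : l ≤ ρ) :
    -(|a| * K) ≤ Φ (ρ + l, T - l) - Φ (ρ, T) := by
  have hle : ρ ≤ ρ + l := by linarith
  have hsub : uIcc ρ (ρ + l) ⊆ Ioi 0 := by
    rw [uIcc_of_le hle]
    exact fun x hx => lt_of_lt_of_le hρ hx.1
  have hmaps : MapsTo (fun r : ℝ => (r, T + ρ - r)) (uIcc ρ (ρ + l)) HP := fun r hr => hsub hr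
  have cE := (h.cont_eDens hp).comp (f := fun r : ℝ => (r, T + ρ - r)) (by fun_prop) hmaps
  have cM := h.cont_mDens.comp (f := fun r : ℝ => (r, T + ρ - r)) (by fun_prop) hmaps
  simp only [Function.comp_def] at cE cM
  have hd : ∀ r ∈ uIcc ρ (ρ + l), HasDerivAt (fun r => Φ (r, T + ρ - r))
      (eDens m a p W (r, T + ρ - r) - mDens m W (r, T + ρ - r)) r := by
    intro r hr
    have := (hΦ (r, T + ρ - r) (hsub hr)).comp_hasDerivAt r
      ((hasDerivAt_id r).prodMk ((hasDerivAt_id r).const_sub (T + ρ)))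
    simpa [Function.comp_def, sub_eq_add_neg] using this
  have h_int : IntervalIntegrable (fun r => eDens m a p W (r, T + ρ - r) - mDens m W (r, T + ρ - r))
      volume ρ (ρ + l) := (cE.sub cM).intervalIntegrable
  have key := intervalIntegral.integral_eq_sub_of_hasDerivAt hd h_int
  have hmono := intervalIntegral.integral_mono_on hle
    (f := fun _ => -(|a| * K / ρ)) intervalIntegrable_const h_int (by
      intro r hr
      have hr0 : 0 < r := lt_of_lt_of_le hρ hr.1
      have hq : (r, T + ρ - r) ∈ HP := hr0
      have h1 := hpt r (T + ρ - r) hr0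
      have h2 : r ^ m * W (r, T + ρ - r) ^ 2 ≤ 2 * K / ρ := by
        rw [le_div_iff₀ hρ]
        refine le_trans ?_ h1
        rw [pow_succ r m]
        have := mul_le_mul_of_nonneg_left hr.1
          (by positivity : 0 ≤ r ^ m * W (r, T + ρ - r) ^ 2)
        linarith
      have h3 : -(|a| * K / ρ) ≤ a / 2 * (r ^ m * W (r, T + ρ - r) ^ 2) := by
        have e1 := mul_le_mul_of_nonneg_left h2 (by positivity : 0 ≤ |a| / 2)
        have e2 := mul_le_mul_of_nonneg_right (neg_abs_le a)
          (by positivity : 0 ≤ r ^ m * W (r, T + ρ - r) ^ 2)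
        have e3 : |a| / 2 * (2 * K / ρ) = |a| * K / ρ := by ring
        linarith
      rw [eDens_eq m a p W hq, mDens]
      have h4 : 0 ≤ 1 / (p + 1) * (r ^ (m + 2) * |W (r, T + ρ - r)| ^ (p + 1)) := by
        have : 0 < p + 1 := by linarith
        positivity
      have h5 : 0 ≤ r ^ (m + 2) * (Dr W (r, T + ρ - r) - Dt W (r, T + ρ - r)) ^ 2 := by
        positivity
      simp only
      nlinarith)
  rw [key] at hmono
  simp only [intervalIntegral.integral_const, smul_eq_mul] at hmono
  have e : T + ρ - (ρ + l) = T - l := by ring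
  have e' : T + ρ - ρ = T := by ring
  rw [e, e'] at hmono
  refine le_trans ?_ hmono
  have : (ρ + l - ρ) * -(|a| * K / ρ) = -(|a| * K) * (l / ρ) := by ring
  rw [this]
  have h6 : l / ρ ≤ 1 := by rw [div_le_one hρ]; exact hlρ
  nlinarith [mul_nonneg (abs_nonneg a) hK0]

/-- The flux bound on a truncated outgoing cone, parametrised by the radius. -/
lemma flux_bound (h : RadSol m a p W) (hp : 1 < p) {c : ℝ} (hc : 0 < c) (hc1 : c ≤ 1 / 2)
    (hc2 : c * (1 + ((m + 1) / 2 : ℝ) ^ 2) ≤ (((m + 1) / 2 : ℝ) ^ 2 + a) / 2)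
    (hc3 : c ≤ 1 / (p + 1)) {E : ℝ}
    (hfin : ∀ t, IntegrableOn (fun r => nDens m p W (r, t)) (Ioi 0))
    (hE : ∀ t, E = ∫ r in Ioi 0, eDens m a p W (r, t)) (η : ℝ) {s R : ℝ} (hs : 0 < s)
    (hsR : s ≤ R) :
    c * (∫ r in s..R, r ^ (m + 2) * ((Dr W (r, r + η) + Dt W (r, r + η)) ^ 2
      + W (r, r + η) ^ 2 / r ^ 2 + |W (r, r + η)| ^ (p + 1)))
      ≤ (2 + 3 * |a| + (m + 1) / 2) * (E / c) := by
  obtain ⟨Φ, hΦ⟩ := h.exists_potential hp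
  set K := E / c with hKdef
  have hK : ∀ t, ∫ r in Ioi 0, nDens m p W (r, t) ≤ K := by
    intro t
    rw [hKdef, le_div_iff₀ hc, mul_comm, hE t]
    exact h.coercive hp hc1 hc2 hc3 (hfin t)
  have hK0 : 0 ≤ K := le_trans (setIntegral_nonneg measurableSet_Ioi fun r hr =>
    nDens_nonneg m p W (q := (r, 0)) hr) (hK 0)
  have hpt : ∀ r t, 0 < r → r ^ (m + 1) * W (r, t) ^ 2 ≤ 2 * K :=
    fun r t hr => h.pointwise (hfin t) (hK t) hr
  have hR : 0 < R := lt_of_lt_of_le hs hsR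
  -- The comparison path runs along time `s + η` to radius `R + 2 (R - s)`, then along an incoming
  -- ray to radius `R + (R - s)` at time `R + η`, then along that time back to radius `R`.
  have hflux : Φ (R, R + η) - Φ (s, s + η) ≤ (2 + 3 * |a|) * K := by
    have i1 := h.incoming hp hΦ hK0 hpt (ρ := R + (R - s)) (l := R - s) (T := R + η)
      (by linarith) (by linarith) (by linarith)
    have i2 := (abs_le.1 (h.horizontal hp hΦ (hfin (R + η)) (hK (R + η)) hR
      (by linarith : R ≤ R + (R - s)))).1
    have i3 := (abs_le.1 (h.horizontal hp hΦ (hfin (s + η)) (hK (s + η)) hs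
      (by linarith : s ≤ R + (R - s) + (R - s)))).2
    rw [show R + η - (R - s) = s + η by ring] at i1
    linarith
  have hmaps : MapsTo (fun r : ℝ => (r, r + η)) (Ioi 0) HP := fun r hr => hr
  have hline : ContinuousOn (fun r : ℝ => (r, r + η)) (Ioi 0) := by fun_prop
  have hsub : uIcc s R ⊆ Ioi 0 := by
    rw [uIcc_of_le hsR]
    exact fun x hx => lt_of_lt_of_le hs hx.1
  have cW := h.cont.comp hline hmaps
  have cD := (h.cont_Dr.comp hline hmaps).add (h.cont_Dt.comp hline hmaps)
  have cE := (h.cont_eDens hp).comp hline hmaps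
  have cM := h.cont_mDens.comp hline hmaps
  simp only [Function.comp_def] at cW cD cE cM
  have iEM : IntervalIntegrable (fun r => eDens m a p W (r, r + η) + mDens m W (r, r + η))
      volume s R := ((cE.mono hsub).add (cM.mono hsub)).intervalIntegrable
  have hd : ∀ r ∈ uIcc s R, HasDerivAt (fun r => Φ (r, r + η))
      (eDens m a p W (r, r + η) + mDens m W (r, r + η)) r := by
    intro r hr
    have := (hΦ (r, r + η) (hsub hr)).comp_hasDerivAt r
      ((hasDerivAt_id r).prodMk ((hasDerivAt_id r).add_const η))
    simpa [Function.comp_def] using this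
  rw [← intervalIntegral.integral_eq_sub_of_hasDerivAt hd iEM] at hflux
  have hv : ∀ r, 0 < r → HasDerivAt (fun r => W (r, r + η))
      (Dr W (r, r + η) + Dt W (r, r + η)) r := by
    intro r hr
    have := (h.diff (q := (r, r + η)) hr).hasFDerivAt.comp_hasDerivAt r
      ((hasDerivAt_id r).prodMk ((hasDerivAt_id r).add_const η))
    rw [fderiv_apply_pair] at this
    simpa [Function.comp_def] using this
  have hardy := hardy_interval m _ _ hv cD hs hsR
  have cA := contOn_weight (m + 2) (cD.mono hsub)
  have cB := contOn_weight m (cW.mono hsub)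
  have cC : ContinuousOn (fun r => r ^ (m + 2) * |W (r, r + η)| ^ (p + 1)) (uIcc s R) :=
    (continuousOn_id.pow _).mul (contOn_abs_rpow hp (cW.mono hsub))
  have hG : ∫ r in s..R, r ^ (m + 2) * ((Dr W (r, r + η) + Dt W (r, r + η)) ^ 2
      + W (r, r + η) ^ 2 / r ^ 2 + |W (r, r + η)| ^ (p + 1))
      = ∫ r in s..R, (r ^ (m + 2) * (Dr W (r, r + η) + Dt W (r, r + η)) ^ 2
      + r ^ m * W (r, r + η) ^ 2 + r ^ (m + 2) * |W (r, r + η)| ^ (p + 1)) := by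
    apply intervalIntegral.integral_congr
    intro r hr
    have hr0 : r ≠ 0 := ne_of_gt (hsub hr)
    simp only
    rw [pow_add]
    field_simp
  rw [hG]
  have iA : IntervalIntegrable (fun r => r ^ (m + 2) * (Dr W (r, r + η) + Dt W (r, r + η)) ^ 2)
      volume s R := cA.intervalIntegrable
  have iB : IntervalIntegrable (fun r => r ^ m * W (r, r + η) ^ 2) volume s R :=
    cB.intervalIntegrable
  have iG : IntervalIntegrable (fun r => r ^ (m + 2) * (Dr W (r, r + η) + Dt W (r, r + η)) ^ 2
      + r ^ m * W (r, r + η) ^ 2 + r ^ (m + 2) * |W (r, r + η)| ^ (p + 1)) volume s R :=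
    ((cA.add cB).add cC).intervalIntegrable
  have hmono : ∫ r in s..R, ((1 / 2 - c) * (r ^ (m + 2) * (Dr W (r, r + η)
      + Dt W (r, r + η)) ^ 2) + (a / 2 - c) * (r ^ m * W (r, r + η) ^ 2)) ≤
      ∫ r in s..R, ((eDens m a p W (r, r + η) + mDens m W (r, r + η))
      - c * (r ^ (m + 2) * (Dr W (r, r + η) + Dt W (r, r + η)) ^ 2
      + r ^ m * W (r, r + η) ^ 2 + r ^ (m + 2) * |W (r, r + η)| ^ (p + 1))) := by
    refine intervalIntegral.integral_mono_on hsR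
      ((iA.const_mul _).add (iB.const_mul _))
      (iEM.sub (iG.const_mul c)) fun r hr => ?_
    have hr0 : 0 < r := lt_of_lt_of_le hs hr.1
    rw [eDens_eq m a p W (q := (r, r + η)) hr0, mDens]
    have k2 := mul_le_mul_of_nonneg_right hc3
      (by positivity : 0 ≤ r ^ (m + 2) * |W (r, r + η)| ^ (p + 1))
    simp only
    linarith
  rw [intervalIntegral.integral_add (iA.const_mul _)
    (iB.const_mul _), intervalIntegral.integral_sub iEM
    (iG.const_mul c), intervalIntegral.integral_const_mul, intervalIntegral.integral_const_mul,
    intervalIntegral.integral_const_mul] at hmono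
  have hB0 : 0 ≤ ∫ r in s..R, r ^ m * W (r, r + η) ^ 2 :=
    intervalIntegral.integral_nonneg hsR fun r hr => by
      have hr0 : 0 < r := lt_of_lt_of_le hs hr.1
      positivity
  have b1 := mul_le_mul_of_nonneg_left (hpt R (R + η) hR)
    (by positivity : 0 ≤ ((m : ℝ) + 1) / 2)
  have b2 := mul_le_mul_of_nonneg_left hardy (by linarith : 0 ≤ 1 / 2 - c)
  have b3 := mul_le_mul_of_nonneg_right hc2 hB0
  have b4 := mul_le_mul_of_nonneg_left b1 (by linarith : 0 ≤ 1 / 2 - c)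
  have b5 : 0 ≤ c * (((m : ℝ) + 1) / 2 * (2 * K)) := by positivity
  nlinarith

end RadSol

/-! ### Reduction of solutions on `ℝ^d` to the radial equation -/

lemma hasFDerivAt_norm_euclid {n : ℕ} {x : EuclideanSpace ℝ (Fin n)} (hx : x ≠ 0) :
    HasFDerivAt (fun y : EuclideanSpace ℝ (Fin n) => ‖y‖) (‖x‖⁻¹ • innerSL ℝ x) x := by
  have h1 := (hasStrictFDerivAt_norm_sq x).hasFDerivAt.sqrt
    (pow_ne_zero 2 (norm_ne_zero_iff.2 hx))
  simp only [Real.sqrt_sq (norm_nonneg _)] at h1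
  convert! h1 using 1
  ext v
  simp
  field_simp

lemma hasFDerivAt_radial {n : ℕ} {x : EuclideanSpace ℝ (Fin n)} (hx : x ≠ 0) {g : ℝ → ℝ}
    {g' : ℝ} (hg : HasDerivAt g g' ‖x‖) :
    HasFDerivAt (fun y : EuclideanSpace ℝ (Fin n) => g ‖y‖) (g' • (‖x‖⁻¹ • innerSL ℝ x)) x :=
  hg.comp_hasFDerivAt x (hasFDerivAt_norm_euclid hx)

lemma norm_gradient_radial {n : ℕ} {x : EuclideanSpace ℝ (Fin n)} (hx : x ≠ 0) {g : ℝ → ℝ}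
    {g' : ℝ} (hg : HasDerivAt g g' ‖x‖) {f : EuclideanSpace ℝ (Fin n) → ℝ}
    (hf : ∀ y, f y = g ‖y‖) : ‖gradient f x‖ ^ 2 = g' ^ 2 := by
  obtain rfl : f = fun y => g ‖y‖ := funext hf
  have hn : ‖x‖ ≠ 0 := norm_ne_zero_iff.2 hx
  rw [gradient, LinearIsometryEquiv.norm_map, (hasFDerivAt_radial hx hg).fderiv, norm_smul,
    norm_smul, innerSL_apply_norm, norm_inv, norm_norm, inv_mul_cancel₀ hn, mul_one,
    Real.norm_eq_abs, sq_abs]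

lemma lap_radial {n : ℕ} {x : EuclideanSpace ℝ (Fin n)} (hx : x ≠ 0) {g g' : ℝ → ℝ}
    {g'' : ℝ} (hg : ∀ ρ, 0 < ρ → HasDerivAt g (g' ρ) ρ) (hg' : HasDerivAt g' g'' ‖x‖) :
    lap (fun y : EuclideanSpace ℝ (Fin n) => g ‖y‖) x = g'' + (n - 1) / ‖x‖ * g' ‖x‖ := by
  have hn : ‖x‖ ≠ 0 := norm_ne_zero_iff.2 hx
  have hterm : ∀ i : Fin n, fderiv ℝ (fun y => fderiv ℝ
      (fun y : EuclideanSpace ℝ (Fin n) => g ‖y‖) y (EuclideanSpace.single i 1)) x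
      (EuclideanSpace.single i 1) =
      (g'' / ‖x‖ ^ 2 - g' ‖x‖ / ‖x‖ ^ 3) * x i ^ 2 + g' ‖x‖ / ‖x‖ := by
    intro i
    have hev : (fun y => fderiv ℝ
      (fun y : EuclideanSpace ℝ (Fin n) => g ‖y‖) y (EuclideanSpace.single i 1)) =ᶠ[𝓝 x]
      fun y => (g' ‖y‖ * ‖y‖⁻¹) * y i := by
      filter_upwards [isOpen_ne.mem_nhds hx] with y hy
      rw [(hasFDerivAt_radial hy (hg _ (norm_pos_iff.2 hy))).fderiv]
      simp [EuclideanSpace.inner_single_right, mul_assoc]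
    rw [hev.fderiv_eq]
    have h1 := hasFDerivAt_radial hx (g := fun ρ => g' ρ * ρ⁻¹) (hg'.mul (hasDerivAt_inv hn))
    have h2 : HasFDerivAt (fun y : EuclideanSpace ℝ (Fin n) => y i)
        (EuclideanSpace.proj i : EuclideanSpace ℝ (Fin n) →L[ℝ] ℝ) x :=
      (EuclideanSpace.proj i : EuclideanSpace ℝ (Fin n) →L[ℝ] ℝ).hasFDerivAt
    have h3 : HasFDerivAt (fun y : EuclideanSpace ℝ (Fin n) => g' ‖y‖ * ‖y‖⁻¹ * y i) _ x :=
      h1.mul h2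
    rw [h3.fderiv]
    simp [EuclideanSpace.inner_single_right]
    field_simp
    ring
  unfold lap
  simp only [hterm]
  rw [Finset.sum_add_distrib, ← Finset.mul_sum, ← EuclideanSpace.real_norm_sq_eq]
  simp
  field_simp
  ring

namespace Sol
variable {m : ℕ} {a p : ℝ}

/-- The radial profile of a solution as a function on the plane. -/
def prof {d : ℕ} (S : Sol d a p) (q : ℝ × ℝ) : ℝ := S.rad q.1 q.2

lemma u_eq {d : ℕ} (S : Sol d a p) (x : EuclideanSpace ℝ (Fin d)) (t : ℝ) :
    S.u x t = S.prof (‖x‖, t) := S.u_eq_rad x t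

lemma smooth_prof (S : Sol (m + 3) a p) : ContDiffOn ℝ 2 S.prof HP := by
  have h := S.smooth.comp (s := HP)
    (f := fun q : ℝ × ℝ => (q.1 • (EuclideanSpace.single (0 : Fin (m + 3)) (1 : ℝ)), q.2))
    (by fun_prop) (by
      intro q hq
      have : q.1 ≠ 0 := ne_of_gt hq
      simp [this])
  refine h.congr fun q hq => ?_
  have hq' : 0 < q.1 := hq
  simp [u_eq, norm_smul, abs_of_pos hq']

lemma radSol (S : Sol (m + 3) a p) : RadSol m a p S.prof := by
  have h2 := S.smooth_prof
  have hd : ∀ q ∈ HP, DifferentiableAt ℝ S.prof q := fun q hq =>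
    (h2.contDiffAt (isOpen_HP.mem_nhds hq)).differentiableAt (by norm_num)
  have hd' : ∀ q ∈ HP, DifferentiableAt ℝ (fderiv ℝ S.prof) q := fun q hq =>
    ((h2.fderiv_of_isOpen isOpen_HP (m := 1) (by norm_num)).differentiableOn
      (by norm_num)).differentiableAt (isOpen_HP.mem_nhds hq)
  refine ⟨h2, ?_⟩
  rintro ⟨r, t⟩ hq
  have hr : 0 < r := hq
  set x : EuclideanSpace ℝ (Fin (m + 3)) := r • EuclideanSpace.single 0 1 with hx
  have hxn : ‖x‖ = r := by simp [hx, norm_smul, abs_of_pos hr]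
  have hx0 : x ≠ 0 := by
    rw [← norm_ne_zero_iff, hxn]; exact hr.ne'
  have hpde := S.pde x t hx0
  have e1 : deriv (deriv (S.u x)) t = Dt (Dt S.prof) (r, t) := by
    have : deriv (S.u x) = fun τ => Dt S.prof (r, τ) := by
      funext τ
      have hu : S.u x = fun τ => S.prof (r, τ) := by
        funext τ; rw [u_eq, hxn]
      rw [hu]
      exact (hd (r, τ) hr).hasDerivAt_Dt.deriv
    rw [this]
    have hD : DifferentiableAt ℝ (Dt S.prof) (r, t) :=
      (hd' (r, t) hr).clm_apply (differentiableAt_const _)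
    exact hD.hasDerivAt_Dt.deriv
  have e2 : lap (fun y => S.u y t) x
      = Dr (Dr S.prof) (r, t) + (m + 2) / r * Dr S.prof (r, t) := by
    have hu : (fun y => S.u y t) = fun y => (fun ρ => S.prof (ρ, t)) ‖y‖ := by
      funext y; rw [u_eq]
    have hD : DifferentiableAt ℝ (Dr S.prof) (r, t) :=
      (hd' (r, t) hr).clm_apply (differentiableAt_const _)
    have hg' : HasDerivAt (fun ρ => Dr S.prof (ρ, t)) (Dr (Dr S.prof) (r, t)) ‖x‖ := by
      rw [hxn]
      exact hD.hasDerivAt_Dr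
    have hg : ∀ ρ, 0 < ρ → HasDerivAt (fun ρ => S.prof (ρ, t)) (Dr S.prof (ρ, t)) ρ :=
      fun ρ hρ => (hd (ρ, t) hρ).hasDerivAt_Dr
    rw [hu]
    refine (lap_radial hx0 hg hg').trans ?_
    rw [hxn]
    push_cast
    ring
  rw [e1, e2, u_eq, hxn] at hpde
  exact hpde

lemma deriv_u {S : Sol (m + 3) a p} {x : EuclideanSpace ℝ (Fin (m + 3))} (hx : x ≠ 0) (t : ℝ) :
    deriv (S.u x) t = Dt S.prof (‖x‖, t) := by
  have hu : S.u x = fun τ => S.prof (‖x‖, τ) := by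
    funext τ; rw [u_eq]
  rw [hu]
  exact (S.radSol.diff (q := (‖x‖, t)) (norm_pos_iff.2 hx)).hasDerivAt_Dt.deriv

lemma grad_u {S : Sol (m + 3) a p} {x : EuclideanSpace ℝ (Fin (m + 3))} (hx : x ≠ 0) (t : ℝ) :
    ‖gradient (fun y => S.u y t) x‖ ^ 2 = Dr S.prof (‖x‖, t) ^ 2 := by
  have hg : HasDerivAt (fun ρ => S.prof (ρ, t)) (Dr S.prof (‖x‖, t)) ‖x‖ :=
    (S.radSol.diff (q := (‖x‖, t)) (norm_pos_iff.2 hx)).hasDerivAt_Dr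
  exact norm_gradient_radial hx hg (fun y => S.u_eq y t)

/-- The total surface area of the unit sphere. -/
def area (d : ℕ) : ℝ := (volume : Measure (EuclideanSpace ℝ (Fin d))).toSphere.real univ

lemma ae_ne_zero (d : ℕ) : ∀ᵐ x : EuclideanSpace ℝ (Fin (d + 1)), x ≠ 0 :=
  compl_mem_ae_iff.2 (measure_singleton 0)

lemma integrable_nDens (S : Sol (m + 3) a p) (t : ℝ) :
    IntegrableOn (fun r => nDens m p S.prof (r, t)) (Ioi 0) := by
  have h1 : Integrable (fun x : EuclideanSpace ℝ (Fin (m + 3)) =>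
      (fun r => Dr S.prof (r, t) ^ 2 + S.prof (r, t) ^ 2 / r ^ 2 + Dt S.prof (r, t) ^ 2
        + |S.prof (r, t)| ^ (p + 1)) ‖x‖) := by
    refine (S.finite t).congr ?_
    filter_upwards [ae_ne_zero (m + 2)] with x hx
    rw [grad_u hx, deriv_u hx, u_eq]
  rw [integrable_fun_norm_addHaar volume (f := fun r => Dr S.prof (r, t) ^ 2
    + S.prof (r, t) ^ 2 / r ^ 2 + Dt S.prof (r, t) ^ 2 + |S.prof (r, t)| ^ (p + 1))] at h1
  refine h1.congr_fun (fun r hr => ?_) measurableSet_Ioi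
  have hr0 : r ≠ 0 := ne_of_gt hr
  simp only [finrank_euclideanSpace_fin, smul_eq_mul, nDens]
  rw [show m + 3 - 1 = m + 2 by omega, pow_add]
  field_simp

lemma energy_eq (S : Sol (m + 3) a p) (t : ℝ) :
    S.energy = area (m + 3) * ∫ r in Ioi 0, eDens m a p S.prof (r, t) := by
  have h1 : S.energy = ∫ x : EuclideanSpace ℝ (Fin (m + 3)),
      (fun r => 1 / 2 * Dr S.prof (r, t) ^ 2 + a / 2 * S.prof (r, t) ^ 2 / r ^ 2
        + 1 / 2 * Dt S.prof (r, t) ^ 2 + 1 / (p + 1) * |S.prof (r, t)| ^ (p + 1)) ‖x‖ := by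
    rw [S.energy_def t]
    refine integral_congr_ae ?_
    filter_upwards [ae_ne_zero (m + 2)] with x hx
    rw [grad_u hx, deriv_u hx, u_eq]
  rw [h1, integral_fun_norm_addHaar volume (fun r => 1 / 2 * Dr S.prof (r, t) ^ 2
    + a / 2 * S.prof (r, t) ^ 2 / r ^ 2
    + 1 / 2 * Dt S.prof (r, t) ^ 2 + 1 / (p + 1) * |S.prof (r, t)| ^ (p + 1)), area,
    Measure.toSphere_real_apply_univ, nsmul_eq_mul, smul_eq_mul, mul_assoc]
  congr 2
  refine setIntegral_congr_fun measurableSet_Ioi fun r hr => ?_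
  simp only [finrank_euclideanSpace_fin, smul_eq_mul, eDens]
  rw [show m + 3 - 1 = m + 2 by omega]
  ring

lemma sphereIntegral_eq (S : Sol (m + 3) a p) {η t : ℝ} (ht : η < t) :
    sphereIntegral (m + 3) (t - η) (fun x =>
        (deriv (fun ρ => S.rad ρ t) ‖x‖ + deriv (S.u x) t) ^ 2
          + (S.u x t) ^ 2 / ‖x‖ ^ 2 + |S.u x t| ^ (p + 1))
      = area (m + 3) * ((t - η) ^ (m + 2) * ((Dr S.prof (t - η, t) + Dt S.prof (t - η, t)) ^ 2
        + S.prof (t - η, t) ^ 2 / (t - η) ^ 2 + |S.prof (t - η, t)| ^ (p + 1))) := by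
  have hr : 0 < t - η := by linarith
  have hω : ∀ ω : Metric.sphere (0 : EuclideanSpace ℝ (Fin (m + 3))) 1,
      ‖(t - η) • (ω : EuclideanSpace ℝ (Fin (m + 3)))‖ = t - η := by
    intro ω
    rw [norm_smul, norm_eq_of_mem_sphere, mul_one, Real.norm_of_nonneg hr.le]
  have hω0 : ∀ ω : Metric.sphere (0 : EuclideanSpace ℝ (Fin (m + 3))) 1,
      (t - η) • (ω : EuclideanSpace ℝ (Fin (m + 3))) ≠ 0 := by
    intro ω
    rw [← norm_ne_zero_iff, hω]; exact hr.ne'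
  have hdr : deriv (fun ρ => S.rad ρ t) (t - η) = Dr S.prof (t - η, t) :=
    (S.radSol.diff (q := (t - η, t)) hr).hasDerivAt_Dr.deriv
  unfold sphereIntegral
  simp only [u_eq, hω, deriv_u (hω0 _), hdr, integral_const, smul_eq_mul]
  rw [area, show m + 3 - 1 = m + 2 by omega]
  ring

end Sol

end Aux

/-- **Energy flux bound through a full light cone (Proposition 3.1, inequality (3.6)).**
There is a constant `C = C(d,p,a)` such that every finite-energy radial classical solution
`u` of (NLW_a) with energy `E` satisfies, for every `η ∈ ℝ`,
`∫_η^∞ ∫_{|x|=t−η} (|∂ᵣu+∂ₜu|² + |u|²/|x|² + |u|^{p+1}) dS dt ≤ C E`. -/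
theorem energy_flux_bound (d : ℕ) (a p : ℝ) (hd : 3 ≤ d)
    (ha : -((d : ℝ) - 2) ^ 2 / 4 < a)
    (hp1 : 1 + 4 / ((d : ℝ) - 1) ≤ p) (hp2 : p < 1 + 4 / ((d : ℝ) - 2)) :
    ∃ C : ℝ, 0 < C ∧
      ∀ (S : Sol d a p) (η : ℝ),
        (∫ t in Set.Ioi η, sphereIntegral d (t - η) (fun x =>
            (deriv (fun ρ => S.rad ρ t) ‖x‖ + deriv (S.u x) t) ^ 2
              + (S.u x t) ^ 2 / ‖x‖ ^ 2
              + |S.u x t| ^ (p + 1)))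
          ≤ C * S.energy := by
  obtain ⟨m, rfl⟩ : ∃ m, d = m + 3 := ⟨d - 3, by omega⟩
  have hm : (0 : ℝ) ≤ m := m.cast_nonneg
  push_cast at ha hp1
  have hp : 1 < p := by
    have : 0 < 4 / ((m : ℝ) + 3 - 1) := by apply div_pos <;> linarith
    linarith
  have hα : 0 < ((m + 1) / 2 : ℝ) ^ 2 + a := by
    have : ((m + 1) / 2 : ℝ) ^ 2 = ((m : ℝ) + 3 - 2) ^ 2 / 4 := by ring
    rw [this]
    linarith
  have hα1 : 0 < 1 + ((m + 1) / 2 : ℝ) ^ 2 := by positivity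
  have hp0 : 0 < p + 1 := by linarith
  obtain ⟨c, hc, hc1, hc2, hc3⟩ : ∃ c : ℝ, 0 < c ∧ c ≤ 1 / 2 ∧
      c * (1 + ((m + 1) / 2 : ℝ) ^ 2) ≤ (((m + 1) / 2 : ℝ) ^ 2 + a) / 2 ∧ c ≤ 1 / (p + 1) := by
    refine ⟨min (min (1 / 2) ((((m + 1) / 2 : ℝ) ^ 2 + a) / 2 / (1 + ((m + 1) / 2 : ℝ) ^ 2)))
      (1 / (p + 1)), by positivity, (min_le_left _ _).trans (min_le_left _ _), ?_,
      min_le_right _ _⟩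
    rw [← le_div_iff₀ hα1]
    exact (min_le_left _ _).trans (min_le_right _ _)
  refine ⟨(2 + 3 * |a| + (m + 1) / 2) / c / c, by positivity, fun S η => ?_⟩
  have hσ : 0 ≤ Sol.area (m + 3) := measureReal_nonneg
  rw [setIntegral_congr_fun measurableSet_Ioi
    (fun t (ht : η < t) => S.sphereIntegral_eq ht), integral_const_mul]
  rcases hσ.eq_or_lt with h0 | hσ0
  · rw [S.energy_eq 0, ← h0]; simp
  have hE : ∀ t, S.energy / Sol.area (m + 3) = ∫ r in Ioi 0, eDens m a p S.prof (r, t) := by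
    intro t
    rw [S.energy_eq t, mul_div_cancel_left₀ _ hσ0.ne']
  have hflux := fun s R hs hsR => S.radSol.flux_bound hp hc hc1 hc2 hc3 S.integrable_nDens hE η
    (s := s) (R := R) hs hsR
  suffices hmain : ∫ t in Ioi η, (t - η) ^ (m + 2) * ((Dr S.prof (t - η, t)
      + Dt S.prof (t - η, t)) ^ 2 + S.prof (t - η, t) ^ 2 / (t - η) ^ 2
      + |S.prof (t - η, t)| ^ (p + 1)) ≤
      (2 + 3 * |a| + (m + 1) / 2) / c / c * (S.energy / Sol.area (m + 3)) by
    refine (mul_le_mul_of_nonneg_left hmain hσ).trans_eq ?_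
    field_simp
  by_cases h_int : IntegrableOn (fun t => (t - η) ^ (m + 2) * ((Dr S.prof (t - η, t)
      + Dt S.prof (t - η, t)) ^ 2 + S.prof (t - η, t) ^ 2 / (t - η) ^ 2
      + |S.prof (t - η, t)| ^ (p + 1))) (Ioi η)
  · refine le_of_tendsto (tendsto_integral_exhaust h_int) ?_
    filter_upwards [eventually_ge_atTop 1] with x hx
    have hx0 : 0 < x⁻¹ := by positivity
    have h := hflux x⁻¹ x hx0 ((inv_le_one_of_one_le₀ hx).trans hx)
    rw [add_comm η x⁻¹, add_comm η x, ← intervalIntegral.integral_comp_add_right]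
    simp only [add_sub_cancel_right]
    rw [mul_comm, ← le_div_iff₀ hc] at h
    refine h.trans_eq ?_
    ring
  · -- The Bochner integral of a non-integrable function is `0`, and the energy is nonnegative.
    rw [integral_undef h_int]
    have h := hflux 1 1 one_pos le_rfl
    rw [intervalIntegral.integral_same, mul_zero] at h
    have h' := div_nonneg h hc.le
    refine h'.trans_eq ?_
    ring
end
end
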